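/- For every real μ > n and integers 1 ≤ ℓ ≤ n, the set {α ∈ ℝⁿ : μ_{n,ℓ}(α) = μ} has Hausdorff dimension n − 1 + (n+1)/(μ+1). In particular, μ_{n,ℓ} attains every value in (n, ∞). -/

import Mathlib

open Finset MeasureTheory

/-- Distance to the nearest integer. -/
noncomputable def dnint (r : ℝ) : ℝ := |r - round r|

/-- Height of an integer vector: maximum of absolute values of coordinates. -/
def Hgt {n : ℕ} (x : Fin n → ℤ) : ℕ := Finset.univ.sup fun i => (x i).natAbs

/-- The cone condition: the height is attained among the first `ℓ` coordinates. -/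
def cone {n : ℕ} (ℓ : ℕ) (x : Fin n → ℤ) : Prop :=
  ((Finset.univ.filter fun i : Fin n => ℓ ≤ (i : ℕ)).sup fun i => (x i).natAbs) <
  ((Finset.univ.filter fun i : Fin n => (i : ℕ) < ℓ).sup fun i => (x i).natAbs)

/-- The restricted Diophantine exponent `μ_{n,ℓ}(α)`. -/
noncomputable def mu (n ℓ : ℕ) (α : Fin n → ℝ) : ℝ :=
  sSup {m : ℝ | 0 ≤ m ∧ {x : Fin n → ℤ | cone ℓ x ∧
    0 < dnint (∑ i, (x i : ℝ) * α i) ∧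
    dnint (∑ i, (x i : ℝ) * α i) ≤ (Hgt x : ℝ) ^ (-m)}.Infinite}

/-!
Upper bound. In a bounded region, `‖x·α‖ ≤ H(x)^{-M}` confines `α` to `O(H(x))` slabs of width
comparable to `H(x)^{-M-1}`. Cutting these into cubes of that side makes the Hausdorff–Cantelli sum
converge for every dimension above `n - 1 + (n + 1) / (M + 1)`.

Lower bound. Write `α = (a, β)` with `β ∈ ℝ^k`, `k = n - 1`, and let `k + t` be the critical
dimension, so that `t = (n + 1) / (m + 1) < 1`. If the level set of `m` were `(k + t)`-null, then so
would be its union `N` with the points of larger exponent and the rational hyperplanes; cover `N` by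
balls with a small sum of `(k + t)`-th powers of radii. By Fubini the balls meeting a suitable
vertical line over some `β` have a small sum of `t`-th powers. That line is cut by the hyperplanes
`q a + x·β = p`, with `q` a prime of size `2 ^ K` and `0 ≤ x i < q`, in about `2 ^ (K (k + 2)) / K`
points. Two of them can be close only if an integer combination `z·β`, obtained by eliminating `a`,
is close to an integer, so by Borel–Cantelli most of them are well separated for almost every `β`.
Hence one can choose nested intervals around such points that avoid the cover and shrink to an `a`
for which `(a, β)` has approximations of every exponent below `m` by vectors in the narrowest cone,
and so in every cone. This point lies outside `N` but in the level set, a contradiction.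
-/

section Hausdorff

open Filter Topology

theorem hausdorffMeasure_limsup_eq_zero {X ι : Type*} [EMetricSpace X] [MeasurableSpace X]
    [BorelSpace X] [Countable ι] {T : ι → Set X} {d : ℝ} (hd : 0 < d)
    (hsum : ∑' i, Metric.ediam (T i) ^ d ≠ ⊤) :
    μH[d] {x | {i | x ∈ T i}.Infinite} = 0 := by
  let tail (F : Finset ι) : ENNReal := ∑' i : {i // i ∉ F}, Metric.ediam (T i) ^ d
  have htail : Tendsto tail atTop (𝓝 0) := ENNReal.tendsto_tsum_compl_atTop_zero hsum
  have hmesh : Tendsto (fun F ↦ tail F ^ d⁻¹) atTop (𝓝 0) := by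
    simpa only [ENNReal.zero_rpow_of_pos (inv_pos.2 hd)] using htail.ennrpow_const d⁻¹
  have hdiam (F : Finset ι) (i : {i // i ∉ F}) : Metric.ediam (T i) ≤ tail F ^ d⁻¹ :=
    (ENNReal.le_rpow_inv_iff hd).2 <|
      ENNReal.le_tsum (f := fun i : {i // i ∉ F} ↦ Metric.ediam (T i) ^ d) i
  have hcover (F : Finset ι) : {x | {i | x ∈ T i}.Infinite} ⊆ ⋃ i : {i // i ∉ F}, T i := by
    intro x hx
    obtain ⟨i, hi, hiF⟩ := hx.exists_notMem_finset F
    exact Set.mem_iUnion.2 ⟨⟨i, hiF⟩, hi⟩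
  have hle := Measure.hausdorffMeasure_le_liminf_tsum d _ _ hmesh (fun F (i : {i // i ∉ F}) ↦ T i)
    (.of_forall hdiam) (.of_forall hcover)
  exact le_antisymm (hle.trans_eq htail.liminf_eq) bot_le

theorem hausdorffMeasure_limsup_eq_zero_of_cover {X ι : Type*} {κ : ι → Type*} [EMetricSpace X]
    [MeasurableSpace X] [BorelSpace X] [Countable ι] {A : ι → Set X} {S : ∀ i, Finset (κ i)}
    {T : ∀ i, κ i → Set X} {c : ι → ENNReal} {d : ℝ} (hd : 0 < d)
    (hA : ∀ i, A i ⊆ ⋃ s ∈ S i, T i s) (hT : ∀ i, ∑ s ∈ S i, Metric.ediam (T i s) ^ d ≤ c i)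
    (hc : ∑' i, c i ≠ ⊤) : μH[d] {x | {i | x ∈ A i}.Infinite} = 0 := by
  refine measure_mono_null (t := {x | {p : Σ i, S i | x ∈ T p.1 p.2}.Infinite}) ?_
    (hausdorffMeasure_limsup_eq_zero hd (ne_top_of_le_ne_top hc ?_))
  · intro x hx hfin
    refine hx ((hfin.image Sigma.fst).subset fun i hi ↦ ?_)
    obtain ⟨s, hs, hxs⟩ := Set.mem_iUnion₂.1 (hA i hi)
    exact ⟨⟨i, s, hs⟩, hxs, rfl⟩
  · rw [ENNReal.tsum_sigma' fun p : Σ i, S i ↦ Metric.ediam (T p.1 p.2) ^ d]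
    refine ENNReal.tsum_le_tsum fun i ↦ ?_
    rw [tsum_fintype, sum_coe_sort (S i) fun s ↦ Metric.ediam (T i s) ^ d]
    exact hT i

theorem exists_cover_tsum_ediam_lt {X : Type*} [EMetricSpace X] [MeasurableSpace X] [BorelSpace X]
    {N : Set X} {d : ℝ} (hd : 0 < d) (hN : μH[d] N = 0) {ε : ENNReal} (hε : 0 < ε) :
    ∃ T : ℕ → Set X, N ⊆ ⋃ i, T i ∧ ∑' i, Metric.ediam (T i) ^ d < ε := by
  rw [Measure.hausdorffMeasure_apply] at hN
  simp only [ENNReal.iSup_eq_zero] at hN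
  have hlt := (hN 1 one_pos).trans_lt hε
  simp only [iInf_lt_iff] at hlt
  obtain ⟨T, hNT, -, hsum⟩ := hlt
  refine ⟨T, hNT, lt_of_le_of_lt (ENNReal.tsum_le_tsum fun i ↦ ?_) hsum⟩
  rcases (T i).eq_empty_or_nonempty with h | h
  · simp only [h, Metric.ediam_empty, ENNReal.zero_rpow_of_pos hd, zero_le]
  · exact le_iSup (fun _ : (T i).Nonempty ↦ Metric.ediam (T i) ^ d) h

theorem exists_closedBall_cover_of_hausdorffMeasure_eq_zero {X : Type*} [MetricSpace X]
    [Nonempty X] [MeasurableSpace X] [BorelSpace X] {N : Set X} {d : ℝ} (hd : 0 < d)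
    (hN : μH[d] N = 0) {ε : ENNReal} (hε : 0 < ε) :
    ∃ (z : ℕ → X) (r : ℕ → ℝ), (∀ i, 0 < r i) ∧ N ⊆ ⋃ i, Metric.closedBall (z i) (r i) ∧
      ∑' i, ENNReal.ofReal (r i ^ d) ≤ ε := by
  obtain ⟨ε', hε'0, hε'⟩ := exists_between hε
  obtain ⟨T, hNT, hT⟩ := exists_cover_tsum_ediam_lt hd hN (tsub_pos_of_lt hε')
  obtain ⟨δ, hδ0, hδ⟩ := ENNReal.exists_pos_sum_of_countable' hε'0.ne' ℕ
  have hT_top (i : ℕ) : Metric.ediam (T i) ^ d ≠ ⊤ := ENNReal.ne_top_of_tsum_ne_top hT.ne_top i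
  have hδ_top (i : ℕ) : δ i ≠ ⊤ := ENNReal.ne_top_of_tsum_ne_top hδ.ne_top i
  let r (i : ℕ) : ENNReal := (Metric.ediam (T i) ^ d + δ i) ^ d⁻¹
  have hr_top (i : ℕ) : r i ≠ ⊤ := ENNReal.rpow_ne_top_of_nonneg (inv_nonneg.2 hd.le)
    (ENNReal.add_ne_top.2 ⟨hT_top i, hδ_top i⟩)
  have hr0 (i : ℕ) : 0 < r i := ENNReal.rpow_pos
    ((hδ0 i).trans_le le_add_self) (ENNReal.add_ne_top.2 ⟨hT_top i, hδ_top i⟩)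
  have hTr (i : ℕ) : Metric.ediam (T i) ≤ r i := (ENNReal.le_rpow_inv_iff hd).2 le_self_add
  have hr (i : ℕ) : ENNReal.ofReal ((r i).toReal ^ d) = Metric.ediam (T i) ^ d + δ i := by
    rw [← ENNReal.ofReal_rpow_of_nonneg ENNReal.toReal_nonneg hd.le,
      ENNReal.ofReal_toReal (hr_top i), ENNReal.rpow_inv_rpow hd.ne']
  classical
  refine ⟨fun i ↦ if h : (T i).Nonempty then h.some else Classical.arbitrary X,
    fun i ↦ (r i).toReal, fun i ↦ ENNReal.toReal_pos (hr0 i).ne' (hr_top i), fun x hx ↦ ?_, ?_⟩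
  · obtain ⟨i, hi⟩ := Set.mem_iUnion.1 (hNT hx)
    have hne : (T i).Nonempty := ⟨x, hi⟩
    refine Set.mem_iUnion.2 ⟨i, ?_⟩
    simp only [dif_pos hne, Metric.mem_closedBall, dist_edist]
    exact ENNReal.toReal_mono (hr_top i)
      ((Metric.edist_le_ediam_of_mem hi hne.some_mem).trans (hTr i))
  · simp only [hr, ENNReal.tsum_add]
    exact (add_le_add hT.le hδ.le).trans_eq (tsub_add_cancel_of_le hε'.le)

theorem hausdorffMeasure_linearMap_fibre_eq_zero {E : Type*} [NormedAddCommGroup E]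
    [NormedSpace ℝ E] [FiniteDimensional ℝ E] [MeasurableSpace E] [BorelSpace E]
    {f : E →ₗ[ℝ] ℝ} (hf : f ≠ 0) {d : ℝ} (hd : Module.finrank ℝ E - 1 < d) (c : ℝ) :
    μH[d] {x | f x = c} = 0 := by
  rcases Set.eq_empty_or_nonempty {x | f x = c} with hempty | hne
  · rw [hempty, measure_empty]
  have hconv : Convex ℝ {x | f x = c} := (convex_singleton c).linear_preimage f
  have hspan : vectorSpan ℝ {x | f x = c} ≤ LinearMap.ker f := by
    rw [vectorSpan_def, Submodule.span_le]
    rintro _ ⟨x, hx, y, hy, rfl⟩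
    simp_all
  have hlt : (Module.finrank ℝ (vectorSpan ℝ {x | f x = c}) : ℝ) < d := by
    have h₁ := Submodule.finrank_mono hspan
    have h₂ := Module.Dual.finrank_ker_add_one_of_ne_zero hf
    have h₃ : (Module.finrank ℝ (vectorSpan ℝ {x | f x = c}) : ℝ) + 1 ≤ Module.finrank ℝ E := by
      exact_mod_cast h₂ ▸ Nat.add_le_add_right h₁ 1
    linarith
  lift d to NNReal using (Nat.cast_nonneg _).trans hlt.le
  apply hausdorffMeasure_of_dimH_lt
  rw [Real.Convex.dimH_eq_finrank_vectorSpan hconv hne]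
  exact_mod_cast hlt

end Hausdorff

section Height

variable {n ℓ : ℕ} {x : Fin n → ℤ}

theorem Hgt_eq_norm (x : Fin n → ℤ) : (Hgt x : ℝ) = ‖fun i ↦ (x i : ℝ)‖ := by
  rw [Pi.norm_def, Hgt, ← NNReal.coe_natCast, NNReal.coe_inj, Nat.cast_finsetSup]
  exact sup_congr rfl fun i _ ↦ by rw [NNReal.natCast_natAbs]; rfl

theorem abs_le_Hgt (x : Fin n → ℤ) (i : Fin n) : |(x i : ℝ)| ≤ Hgt x := by
  rw [Hgt_eq_norm]
  exact norm_le_pi_norm (fun i ↦ (x i : ℝ)) i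

theorem exists_natAbs_eq_Hgt [NeZero n] (x : Fin n → ℤ) : ∃ i, (x i).natAbs = Hgt x := by
  obtain ⟨i, -, hi⟩ := exists_mem_eq_sup univ univ_nonempty fun i ↦ (x i).natAbs
  exact ⟨i, hi.symm⟩

theorem summable_Hgt_rpow {r : ℝ} (hr : r < -n) :
    Summable fun x : Fin n → ℤ ↦ (Hgt x : ℝ) ^ r := by
  let L := Submodule.span ℤ (Set.range (Pi.basisFun ℝ (Fin n)))
  have hrank : Module.finrank ℤ L = n := by rw [ZLattice.rank ℝ L, Module.finrank_fin_fun]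
  have hmem (x : Fin n → ℤ) : (fun i ↦ (x i : ℝ)) ∈ L :=
    ((Pi.basisFun ℝ (Fin n)).mem_span_iff_repr_mem ℤ _).2 fun i ↦ ⟨x i, by simp⟩
  have hinj : Function.Injective fun x : Fin n → ℤ ↦ (⟨_, hmem x⟩ : L) := fun x y hxy ↦
    funext fun i ↦ Int.cast_injective (congrFun (congrArg Subtype.val hxy) i)
  refine ((ZLattice.summable_norm_rpow L r (by rwa [hrank])).comp_injective hinj).congr fun x ↦ ?_
  rw [Hgt_eq_norm]
  rfl

theorem one_le_Hgt_of_cone (h : cone ℓ x) : 1 ≤ Hgt x :=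
  (Nat.succ_le_of_lt (Nat.zero_lt_of_lt h)).trans (sup_mono (filter_subset _ _))

theorem cone_mono {ℓ' : ℕ} (hℓ : ℓ ≤ ℓ') (h : cone ℓ x) : cone ℓ' x :=
  ((sup_mono (monotone_filter_right _ fun _ _ hi ↦ hℓ.trans hi)).trans_lt h).trans_le
    (sup_mono (monotone_filter_right _ fun _ _ hi ↦ lt_of_lt_of_le hi hℓ))

end Height

section UpperBound

/-- The points `α` admitting infinitely many `x` in the cone with
`0 < ‖x·α‖ ≤ H(x)^{-M}`, so that `mu n ℓ α` is the supremum of the `M ≥ 0` with `α` in this set. -/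
def coneApproximable (n ℓ : ℕ) (M : ℝ) : Set (Fin n → ℝ) :=
  {α | {x : Fin n → ℤ | cone ℓ x ∧ 0 < dnint (∑ i, (x i : ℝ) * α i) ∧
    dnint (∑ i, (x i : ℝ) * α i) ≤ (Hgt x : ℝ) ^ (-M)}.Infinite}

/-- A piece of the slab `|a·α - c| ≤ ‖a‖ δ` on which every coordinate but the `i`-th is confined to
one interval of the grid of mesh `δ`. -/
def slabCell {ι : Type*} [Fintype ι] (a : ι → ℝ) (c δ : ℝ) (i : ι) (κ : {j // j ≠ i} → ℤ) :
    Set (ι → ℝ) :=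
  {α | |∑ j, a j * α j - c| ≤ ‖a‖ * δ ∧ ∀ j : {j // j ≠ i}, ⌊α j / δ⌋ = κ j}

theorem ediam_slabCell_le {ι : Type*} [Fintype ι] {a : ι → ℝ} {i : ι} (ha : 0 < ‖a‖)
    (hi : |a i| = ‖a‖) {δ : ℝ} (hδ : 0 < δ) (c : ℝ) (κ : {j // j ≠ i} → ℤ) :
    Metric.ediam (slabCell a c δ i κ) ≤ ENNReal.ofReal ((Fintype.card ι + 2) * δ) := by
  classical
  refine Metric.ediam_le fun α hα β hβ ↦ ?_
  rw [edist_dist]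
  refine ENNReal.ofReal_le_ofReal ((dist_pi_le_iff (by positivity)).2 fun j ↦ ?_)
  have hne (j : {j // j ≠ i}) : |α j - β j| ≤ δ := by
    have h := Int.abs_sub_lt_one_of_floor_eq_floor ((hα.2 j).trans (hβ.2 j).symm)
    rw [← sub_div, abs_div, abs_of_pos hδ, div_lt_one hδ] at h
    exact h.le
  rw [Real.dist_eq]
  by_cases hj : j = i
  · subst hj
    have hrest : |∑ l : {l // l ≠ j}, a l * (α l - β l)| ≤ Fintype.card ι * (‖a‖ * δ) := calc
      _ ≤ ∑ _l : {l // l ≠ j}, ‖a‖ * δ := (abs_sum_le_sum_abs _ _).trans <| sum_le_sum fun l _ ↦ by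
        rw [abs_mul]
        gcongr
        exacts [norm_le_pi_norm a l, hne l]
      _ ≤ _ := by
        rw [sum_const, card_univ, nsmul_eq_mul]
        gcongr
        exact Fintype.card_subtype_le _
    have hsplit : a j * (α j - β j) = (∑ l, a l * α l - c) - (∑ l, a l * β l - c)
        - ∑ l : {l // l ≠ j}, a l * (α l - β l) := by
      simp only [Fintype.sum_eq_add_sum_subtype_ne _ j, mul_sub, sum_sub_distrib]
      ring
    refine le_of_mul_le_mul_left ?_ ha
    calc ‖a‖ * |α j - β j| = |a j * (α j - β j)| := by rw [abs_mul, hi]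
      _ ≤ |∑ l, a l * α l - c| + |∑ l, a l * β l - c|
          + |∑ l : {l // l ≠ j}, a l * (α l - β l)| := by
        rw [hsplit]
        exact (abs_sub _ _).trans (add_le_add_left (abs_sub _ _) _)
      _ ≤ ‖a‖ * ((Fintype.card ι + 2) * δ) := by linarith [hα.1, hβ.1]
  · exact (hne ⟨j, hj⟩).trans (le_mul_of_one_le_left hδ.le (by
      linarith [(Fintype.card ι).cast_nonneg (α := ℝ)]))

/-- The labels `(c, κ)` of the cells `slabCell a c δ i κ` with `|c| ≤ P` and `|κ j| ≤ K`. -/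
noncomputable def slabLabels {ι : Type*} [Fintype ι] [DecidableEq ι] (i : ι) (P K : ℕ) :
    Finset (ℤ × ({j // j ≠ i} → ℤ)) :=
  Icc (-P : ℤ) P ×ˢ Fintype.piFinset fun _ ↦ Icc (-K : ℤ) K

theorem card_slabLabels {ι : Type*} [Fintype ι] [DecidableEq ι] (i : ι) (P K : ℕ) :
    #(slabLabels i P K) = (2 * P + 1) * (2 * K + 1) ^ (Fintype.card ι - 1) := by
  have hIcc (N : ℕ) : #(Icc (-N : ℤ) N) = 2 * N + 1 := by
    rw [Int.card_Icc]
    lia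
  simp only [slabLabels, card_product, hIcc, Fintype.card_piFinset, prod_const, card_univ,
    Fintype.card_subtype_compl, Fintype.card_subtype_eq]

variable {n : ℕ}

theorem exists_mem_slabCell {x : Fin n → ℤ} {R : ℕ} {δ : ℝ} (hδ : 0 < δ) (i : Fin n)
    {α : Fin n → ℝ} (hα : ‖α‖ ≤ R) (h : dnint (∑ j, (x j : ℝ) * α j) ≤ Hgt x * δ) :
    ∃ s ∈ slabLabels i (n * Hgt x * R + 1) ⌈R / δ⌉₊,
      α ∈ slabCell (fun j ↦ (x j : ℝ)) s.1 δ i s.2 := by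
  have hcoord (j : Fin n) : |α j| ≤ R := (norm_le_pi_norm α j).trans hα
  refine ⟨(round (∑ j, (x j : ℝ) * α j), fun j ↦ ⌊α j / δ⌋), mem_product.2 ⟨?_, ?_⟩,
    by rwa [← Hgt_eq_norm], fun _ ↦ rfl⟩
  · have hsum : |∑ j, (x j : ℝ) * α j| ≤ n * Hgt x * R := calc
      _ ≤ ∑ _j : Fin n, (Hgt x : ℝ) * R := (abs_sum_le_sum_abs _ _).trans <| sum_le_sum fun j _ ↦ by
        rw [abs_mul]
        gcongr
        exacts [abs_le_Hgt x j, hcoord j]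
      _ = n * Hgt x * R := by rw [sum_const, card_univ, Fintype.card_fin, nsmul_eq_mul, mul_assoc]
    have hround := abs_le.1 (abs_sub_round (∑ j, (x j : ℝ) * α j))
    have hsum' := abs_le.1 hsum
    rw [mem_Icc]
    constructor
    · have : -((n * Hgt x * R + 1 : ℕ) : ℝ) ≤ round (∑ j, (x j : ℝ) * α j) := by
        push_cast
        linarith
      exact_mod_cast this
    · have : (round (∑ j, (x j : ℝ) * α j) : ℝ) ≤ (n * Hgt x * R + 1 : ℕ) := by
        push_cast
        linarith
      exact_mod_cast this
  · refine Fintype.mem_piFinset.2 fun j ↦ ?_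
    have hdiv : |α j / δ| ≤ ⌈R / δ⌉₊ := by
      rw [abs_div, abs_of_pos hδ]
      exact (div_le_div_of_nonneg_right (hcoord j) hδ.le).trans (Nat.le_ceil _)
    obtain ⟨hlow, hupp⟩ := abs_le.1 hdiv
    exact mem_Icc.2 ⟨Int.le_floor.2 (by exact_mod_cast hlow),
      Int.cast_le.1 ((Int.floor_le _).trans (by exact_mod_cast hupp) : (_ : ℝ) ≤ _)⟩

theorem sum_ediam_slabCell_rpow_le {x : Fin n → ℤ} (hx : 1 ≤ Hgt x) {i : Fin n}
    (hi : (x i).natAbs = Hgt x) (R : ℕ) {δ d : ℝ} (hδ : 0 < δ) (hδ1 : δ ≤ 1) (hd : 0 ≤ d) :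
    ∑ s ∈ slabLabels i (n * Hgt x * R + 1) ⌈R / δ⌉₊,
        Metric.ediam (slabCell (fun j ↦ (x j : ℝ)) s.1 δ i s.2) ^ d ≤
      ENNReal.ofReal ((2 * n * R + 3) * (2 * R + 3) ^ (n - 1) * (n + 2) ^ d *
        (Hgt x * δ ^ (d - (n - 1 : ℕ)))) := by
  have hH : (1 : ℝ) ≤ Hgt x := by exact_mod_cast hx
  have hxi : |(x i : ℝ)| = ‖fun j ↦ (x j : ℝ)‖ := by
    rw [← Hgt_eq_norm, ← hi, Nat.cast_natAbs, Int.cast_abs]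
  have hcell (s : ℤ × ({j // j ≠ i} → ℤ)) :
      Metric.ediam (slabCell (fun j ↦ (x j : ℝ)) s.1 δ i s.2) ^ d ≤
        ENNReal.ofReal (((n + 2) * δ) ^ d) := by
    rw [← ENNReal.ofReal_rpow_of_nonneg (by positivity) hd]
    have hdiam := ediam_slabCell_le (by rw [← Hgt_eq_norm]; positivity) hxi hδ s.1 s.2
    rw [Fintype.card_fin] at hdiam
    exact ENNReal.rpow_le_rpow hdiam hd
  have hcard : (#(slabLabels i (n * Hgt x * R + 1) ⌈R / δ⌉₊) : ℝ) ≤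
      (2 * n * R + 3) * Hgt x * ((2 * R + 3) / δ) ^ (n - 1) := by
    have hceil := (Nat.ceil_lt_add_one (by positivity : 0 ≤ R / δ)).le
    have hδ' : 1 ≤ 1 / δ := (one_le_div hδ).2 hδ1
    rw [card_slabLabels, Fintype.card_fin]
    push_cast
    gcongr
    · nlinarith
    · linear_combination 2 * hceil + 3 * hδ'
  refine (sum_le_card_nsmul _ _ _ fun s _ ↦ hcell s).trans ?_
  rw [nsmul_eq_mul, ← ENNReal.ofReal_natCast, ← ENNReal.ofReal_mul (by positivity)]
  refine ENNReal.ofReal_le_ofReal ((mul_le_mul_of_nonneg_right hcard (by positivity)).trans_eq ?_)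
  rw [Real.mul_rpow (by positivity) hδ.le, div_pow, Real.rpow_sub hδ, Real.rpow_natCast]
  ring

theorem hausdorffMeasure_coneApproximable_inter_eq_zero [NeZero n] (ℓ R : ℕ) {M d : ℝ} (hM : -1 < M)
    (hd : n - 1 + (n + 1) / (M + 1) < d) :
    μH[d] (coneApproximable n ℓ M ∩ {α | ‖α‖ ≤ R}) = 0 := by
  have hn : (1 : ℝ) ≤ n := by exact_mod_cast NeZero.one_le
  have hM1 : 0 < M + 1 := by linarith
  have hd0 : 0 < d := by linarith [div_pos (by linarith : (0 : ℝ) < n + 1) hM1]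
  choose i hi using exists_natAbs_eq_Hgt (n := n)
  let δ (x : Fin n → ℤ) : ℝ := Hgt x ^ (-(1 + M))
  let A (x : {x : Fin n → ℤ // 1 ≤ Hgt x}) : Set (Fin n → ℝ) :=
    {α | ‖α‖ ≤ R ∧ dnint (∑ j, (x.1 j : ℝ) * α j) ≤ Hgt x.1 * δ x.1}
  have hHgt (x : {x : Fin n → ℤ // 1 ≤ Hgt x}) : (0 : ℝ) < Hgt x.1 := by exact_mod_cast x.2
  have hmul (x : {x : Fin n → ℤ // 1 ≤ Hgt x}) (s : ℝ) :
      (Hgt x.1 : ℝ) * Hgt x.1 ^ s = Hgt x.1 ^ (1 + s) := by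
    rw [Real.rpow_add (hHgt x), Real.rpow_one]
  have hlimsup : μH[d] {α | {x | α ∈ A x}.Infinite} = 0 := by
    refine hausdorffMeasure_limsup_eq_zero_of_cover hd0
      (S := fun x ↦ slabLabels (i x.1) (n * Hgt x.1 * R + 1) ⌈R / δ x.1⌉₊)
      (T := fun x s ↦ slabCell (fun j ↦ (x.1 j : ℝ)) s.1 (δ x.1) (i x.1) s.2)
      (fun x α hα ↦ ?_) (fun x ↦ ?_) ?_ (c := fun x ↦
        ENNReal.ofReal ((2 * n * R + 3) * (2 * R + 3) ^ (n - 1) * (n + 2) ^ d *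
          (Hgt x.1 : ℝ) ^ (1 - (1 + M) * (d - (n - 1)))))
    · obtain ⟨s, hs, hαs⟩ := exists_mem_slabCell (Real.rpow_pos_of_pos (hHgt x) _) (i x.1) hα.1 hα.2
      exact Set.mem_iUnion₂.2 ⟨s, hs, hαs⟩
    · refine (sum_ediam_slabCell_rpow_le x.2 (hi x.1) R (Real.rpow_pos_of_pos (hHgt x) _)
        (Real.rpow_le_one_of_one_le_of_nonpos (by exact_mod_cast x.2) (by linarith))
        hd0.le).trans_eq ?_
      rw [← Real.rpow_mul (hHgt x).le, hmul, Nat.cast_pred (NeZero.pos n), neg_mul,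
        ← sub_eq_add_neg]
    · have hexp : 1 - (1 + M) * (d - (n - 1)) < -n := by
        have := (div_lt_iff₀ hM1).1 (by linarith : (n + 1) / (M + 1) < d - (n - 1))
        linarith
      exact (((summable_Hgt_rpow hexp).comp_injective
        Subtype.val_injective).mul_left _).tsum_ofReal_ne_top
  refine measure_mono_null (fun α ⟨hα, hαR⟩ ↦ ?_) hlimsup
  refine (hα.preimage (f := Subtype.val) fun x hx ↦ ⟨⟨x, one_le_Hgt_of_cone hx.1⟩, rfl⟩).mono ?_
  refine fun x hx ↦ ⟨hαR, hx.2.2.trans_eq ?_⟩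
  rw [hmul, neg_add, add_neg_cancel_left]

theorem hausdorffMeasure_coneApproximable_eq_zero [NeZero n] (ℓ : ℕ) {M d : ℝ} (hM : -1 < M)
    (hd : n - 1 + (n + 1) / (M + 1) < d) : μH[d] (coneApproximable n ℓ M) = 0 := by
  refine measure_mono_null (fun α hα ↦ ?_)
    (measure_iUnion_null fun R ↦ hausdorffMeasure_coneApproximable_inter_eq_zero ℓ R hM hd)
  obtain ⟨R, hR⟩ := exists_nat_ge ‖α‖
  exact Set.mem_iUnion.2 ⟨R, hα, hR⟩

end UpperBound

section Exponent

variable {n ℓ : ℕ} {m M : ℝ} {α : Fin n → ℝ}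

theorem coneApproximable_antitone (n ℓ : ℕ) : Antitone (coneApproximable n ℓ) := by
  refine fun M M' hM α hα ↦ Set.Infinite.mono (fun x hx ↦ ⟨hx.1, hx.2.1, hx.2.2.trans ?_⟩) hα
  exact Real.rpow_le_rpow_of_exponent_le (by exact_mod_cast one_le_Hgt_of_cone hx.1)
    (neg_le_neg hM)

theorem mem_coneApproximable_of_lt_mu (hm : 0 < mu n ℓ α) (hM : M < mu n ℓ α) :
    α ∈ coneApproximable n ℓ M := by
  have hne : {M : ℝ | 0 ≤ M ∧ α ∈ coneApproximable n ℓ M}.Nonempty :=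
    Set.nonempty_iff_ne_empty.2 fun h ↦ hm.ne' ((congrArg sSup h).trans Real.sSup_empty)
  obtain ⟨M', ⟨-, hM'⟩, hlt⟩ := exists_lt_of_lt_csSup hne hM
  exact coneApproximable_antitone n ℓ hlt.le hM'

theorem mu_eq_of_forall_lt_of_forall_gt (hm : 0 < m)
    (hlt : ∀ M < m, α ∈ coneApproximable n ℓ M) (hgt : ∀ M > m, α ∉ coneApproximable n ℓ M) :
    mu n ℓ α = m := by
  refine csSup_eq_of_forall_le_of_forall_lt_exists_gt ⟨0, le_rfl, hlt 0 hm⟩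
    (fun M hM ↦ not_lt.1 fun h ↦ hgt M h hM.2) fun w hw ↦ ?_
  obtain ⟨M, hwM, hMm⟩ := exists_between (max_lt hm hw)
  exact ⟨M, ⟨(le_max_left _ _).trans hwM.le, hlt M hMm⟩, (le_max_right _ _).trans_lt hwM⟩

theorem mem_coneApproximable_of_irrational
    (hα : ∀ x : Fin n → ℤ, x ≠ 0 → ∀ p : ℤ, ∑ i, (x i : ℝ) * α i ≠ p) {v : ℕ → ℝ}
    (hv : ∀ᶠ j in Filter.atTop, M ≤ v j)
    (h : ∀ j, ∃ x : Fin n → ℤ, cone ℓ x ∧ j ≤ Hgt x ∧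
      dnint (∑ i, (x i : ℝ) * α i) ≤ (Hgt x : ℝ) ^ (-v j)) :
    α ∈ coneApproximable n ℓ M := by
  refine Set.Infinite.of_image Hgt (Set.infinite_of_forall_exists_gt fun B ↦ ?_)
  obtain ⟨j, hMv, hj⟩ := (hv.and (Filter.eventually_gt_atTop B)).exists
  obtain ⟨x, hcone, hjx, hx⟩ := h j
  have hH : 1 ≤ Hgt x := one_le_Hgt_of_cone hcone
  have hx0 : x ≠ 0 := by
    rintro rfl
    simp [Hgt] at hH
  refine ⟨Hgt x, ⟨x, ⟨hcone, ?_, hx.trans ?_⟩, rfl⟩, hj.trans_le hjx⟩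
  · exact abs_pos.2 (sub_ne_zero.2 (hα x hx0 _))
  · exact Real.rpow_le_rpow_of_exponent_le (by exact_mod_cast hH) (neg_le_neg hMv)

theorem hausdorffMeasure_exists_gt_mem_coneApproximable_eq_zero [NeZero n] (ℓ : ℕ) {d : ℝ}
    (hm : -1 < m) (hd : n - 1 + (n + 1) / (m + 1) ≤ d) :
    μH[d] {α | ∃ M > m, α ∈ coneApproximable n ℓ M} = 0 := by
  have hnull (j : ℕ) : μH[d] (coneApproximable n ℓ (m + 1 / (j + 1))) = 0 := by
    have hj : (0 : ℝ) < 1 / (j + 1) := Nat.one_div_pos_of_nat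
    refine hausdorffMeasure_coneApproximable_eq_zero ℓ (by linarith) (lt_of_lt_of_le ?_ hd)
    have : (n + 1) / (m + 1 / (j + 1) + 1) < (n + 1) / (m + 1) :=
      div_lt_div_of_pos_left (by positivity) (by linarith) (by linarith)
    linarith
  refine measure_mono_null (fun α ⟨M, hM, hα⟩ ↦ ?_) (measure_iUnion_null hnull)
  obtain ⟨j, hj⟩ := exists_nat_one_div_lt (sub_pos.2 hM)
  exact Set.mem_iUnion.2 ⟨j, coneApproximable_antitone n ℓ (by linarith) hα⟩

theorem hausdorffMeasure_rational_hyperplanes_eq_zero {d : ℝ} (hd : n - 1 < d) :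
    μH[d] {α : Fin n → ℝ | ∃ x : Fin n → ℤ, x ≠ 0 ∧ ∃ p : ℤ, ∑ i, (x i : ℝ) * α i = p} = 0 := by
  let f (x : Fin n → ℤ) : (Fin n → ℝ) →ₗ[ℝ] ℝ := ∑ i, (x i : ℝ) • LinearMap.proj i
  have hf (x : Fin n → ℤ) (α : Fin n → ℝ) : f x α = ∑ i, (x i : ℝ) * α i := by simp [f]
  have hf0 {x : Fin n → ℤ} (hx : x ≠ 0) : f x ≠ 0 := fun h ↦ by
    obtain ⟨i, hi⟩ := Function.ne_iff.1 hx
    exact hi (by simpa [h, Pi.single_apply] using (hf x (Pi.single i 1)).symm)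
  have hnull (y : {x : Fin n → ℤ // x ≠ 0} × ℤ) : μH[d] {α | f y.1 α = y.2} = 0 :=
    hausdorffMeasure_linearMap_fibre_eq_zero (hf0 y.1.2) (by rwa [Module.finrank_fin_fun]) _
  refine measure_mono_null (fun α ⟨x, hx, p, hα⟩ ↦ ?_) (measure_iUnion_null hnull)
  exact Set.mem_iUnion.2 ⟨(⟨x, hx⟩, p), (hf x α).trans hα⟩

theorem dimH_mu_eq_le [NeZero n] (ℓ : ℕ) (hm : 0 < m) :
    dimH {α : Fin n → ℝ | mu n ℓ α = m} ≤ ENNReal.ofReal (n - 1 + (n + 1) / (m + 1)) := by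
  refine dimH_le fun d hd ↦ not_lt.1 fun hlt ↦ ?_
  rw [← ENNReal.ofReal_coe_nnreal, ENNReal.ofReal_lt_ofReal_iff'] at hlt
  have hcont : ContinuousAt (fun M : ℝ ↦ (n - 1 + (n + 1) / (M + 1) : ℝ)) m :=
    continuousAt_const.add (continuousAt_const.div (by fun_prop) (by linarith))
  obtain ⟨M, ⟨hMd, hM0⟩, hMm⟩ := (((hcont.eventually (gt_mem_nhds hlt.1)).and
    (lt_mem_nhds hm)).filter_mono nhdsWithin_le_nhds |>.and
    (self_mem_nhdsWithin (s := Set.Iio m))).exists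
  have hsub : {α | mu n ℓ α = m} ⊆ coneApproximable n ℓ M := by
    rintro α rfl
    exact mem_coneApproximable_of_lt_mu hm hMm
  have hnull := hausdorffMeasure_coneApproximable_eq_zero ℓ (by linarith) hMd
  exact ENNReal.zero_ne_top ((measure_mono_null hsub hnull).symm.trans hd)

end Exponent

section Avoidance

open Metric Filter Topology

variable {X ι : Type*} [PseudoMetricSpace X]

/-- `U` is spread in `B` (with dimension `t` and constant `A`) if every ball inside `B` contains
finitely many arbitrarily small balls of a common radius, all inside `U`, whose centres are
distributed among the balls of radius `r` at least as evenly as `A r / L + o(1) r ^ t` demands. -/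
def IsSpread (t A : ℝ) (B U : Set X) : Prop :=
  ∀ ⦃x : X⦄ ⦃L : ℝ⦄, 0 < L → closedBall x L ⊆ B → ∀ η > 0,
    ∃ (F : Finset X) (ρ : ℝ), F.Nonempty ∧ 0 < ρ ∧ ρ ≤ η ∧
      (∀ P ∈ F, dist P x + ρ ≤ L ∧ closedBall P ρ ⊆ U) ∧
      ∀ z r, ρ ≤ r → (#{P ∈ F | dist P z ≤ r} : ℝ) ≤ #F * (A * r / L + η * r ^ t)

/-- The total weight `∑ (r i) ^ t` of the balls `closedBall (z i) (r i)` near `closedBall x L`: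
those whose centre is at distance at most `L + r i` from `x`. -/
noncomputable def ballWeight (t : ℝ) (z : ι → X) (r : ι → ℝ) (x : X) (L : ℝ) : ENNReal :=
  ∑' i, {i | dist x (z i) ≤ L + r i}.indicator (fun i ↦ ENNReal.ofReal (r i ^ t)) i

variable {t A θ L : ℝ} {z : ι → X} {r : ι → ℝ} {x : X}

theorem le_of_ballWeight_le (ht : 0 < t) (hr : ∀ i, 0 < r i) {R : ℝ} (hR : 0 ≤ R)
    (hw : ballWeight t z r x L ≤ ENNReal.ofReal (R ^ t)) {i : ι} (hi : dist x (z i) ≤ L + r i) :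
    r i ≤ R := by
  have hle : ENNReal.ofReal (r i ^ t) ≤ ballWeight t z r x L := by
    refine le_trans ?_ (ENNReal.le_tsum i)
    simp only [Set.indicator_apply, Set.mem_ofPred_eq, if_pos hi, le_refl]
  rw [← Real.rpow_le_rpow_iff (hr i).le hR ht,
    ← ENNReal.ofReal_le_ofReal_iff (Real.rpow_nonneg hR t)]
  exact hle.trans hw

theorem ballWeight_le_tsum (t : ℝ) (z : ι → X) (r : ι → ℝ) (x : X) (L : ℝ) :
    ballWeight t z r x L ≤ ∑' i, ENNReal.ofReal (r i ^ t) :=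
  ENNReal.tsum_le_tsum fun i ↦ Set.indicator_le_self _ _ i

theorem exists_small_constant (ht1 : t < 1) (A : ℝ) :
    ∃ θ : ℝ, 0 < θ ∧ θ ≤ 1 ∧ 8 * A * θ ^ (1 - t) ≤ 1 := by
  have hlim : Tendsto (fun θ : ℝ ↦ 8 * A * θ ^ (1 - t)) (𝓝[>] 0) (𝓝 0) := by
    have := ((Real.continuousAt_rpow_const 0 (1 - t) (.inr (by linarith))).tendsto.const_mul
      (8 * A)).mono_left (nhdsWithin_le_nhds (s := Set.Ioi 0))
    rwa [Real.zero_rpow (by linarith), mul_zero] at this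
  obtain ⟨θ, ⟨hθ0, hθ1⟩, hθ⟩ := ((Filter.eventually_mem_set.2 (Ioc_mem_nhdsGT one_pos)).and
    (hlim.eventually_le_const one_pos)).exists
  exact ⟨θ, hθ0, hθ1, hθ⟩

-- As `t < 1`, for `s` and `ρ` small relative to `L` the bracket is at most a small multiple of
-- `max s ρ ^ t`; then `min s ρ * max s ρ = s ρ` makes the bound proportional to `s ^ t`.
theorem min_rpow_mul_le {s ρ η : ℝ} (ht : 0 < t) (ht1 : t < 1) (hA : 0 < A) (hL : 0 < L)
    (hθ : 0 < θ) (hθA : 8 * A * θ ^ (1 - t) ≤ 1) (hs : 0 < s) (hρ : 0 < ρ) (hη : 0 < η)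
    (hsL : s ≤ θ * L) (hρL : ρ ≤ θ * L) (hηL : 8 * η * L ^ t ≤ 1) :
    min s ρ ^ t * (A * (s + ρ) / L + η * (s + ρ) ^ t) ≤ ρ ^ t * s ^ t / (2 * L ^ t) := by
  set M := max s ρ
  have hM : 0 < M := lt_max_of_lt_left hs
  have hsum : s + ρ ≤ 2 * M := by linarith [le_max_left s ρ, le_max_right s ρ]
  have hcoarse : A * (s + ρ) / L ≤ M ^ t / (4 * L ^ t) := by
    have hMθ : M ^ (1 - t) ≤ θ ^ (1 - t) * L ^ (1 - t) := by
      rw [← Real.mul_rpow hθ.le hL.le]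
      exact Real.rpow_le_rpow hM.le (max_le hsL hρL) (by linarith)
    have hsplit {y : ℝ} (hy : 0 < y) : y ^ t * y ^ (1 - t) = y := by
      rw [← Real.rpow_add hy, add_sub_cancel, Real.rpow_one]
    rw [div_le_div_iff₀ hL (by positivity)]
    calc A * (s + ρ) * (4 * L ^ t) ≤ A * (2 * M) * (4 * L ^ t) := by gcongr
      _ = 8 * A * M ^ (1 - t) * M ^ t * L ^ t := by linear_combination -8 * A * L ^ t * hsplit hM
      _ ≤ 8 * A * (θ ^ (1 - t) * L ^ (1 - t)) * M ^ t * L ^ t := by gcongr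
      _ = 8 * A * θ ^ (1 - t) * (M ^ t * L) := by
        linear_combination 8 * A * θ ^ (1 - t) * M ^ t * hsplit hL
      _ ≤ M ^ t * L := mul_le_of_le_one_left (by positivity) hθA
  have hfine : η * (s + ρ) ^ t ≤ M ^ t / (4 * L ^ t) := by
    have h2 : (2 : ℝ) ^ t ≤ 2 := Real.rpow_le_self_of_one_le one_le_two ht1.le
    rw [le_div_iff₀ (by positivity)]
    calc η * (s + ρ) ^ t * (4 * L ^ t) ≤ η * (2 * M ^ t) * (4 * L ^ t) := by
          gcongr
          calc (s + ρ) ^ t ≤ (2 * M) ^ t := by gcongr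
            _ = 2 ^ t * M ^ t := Real.mul_rpow zero_le_two hM.le
            _ ≤ 2 * M ^ t := by gcongr
      _ = 8 * η * L ^ t * M ^ t := by ring
      _ ≤ M ^ t := mul_le_of_le_one_left (by positivity) hηL
  have hminmax : min s ρ ^ t * M ^ t = ρ ^ t * s ^ t := by
    rw [← Real.mul_rpow (lt_min hs hρ).le hM.le, min_mul_max, Real.mul_rpow hs.le hρ.le, mul_comm]
  calc _ ≤ min s ρ ^ t * (M ^ t / (4 * L ^ t) + M ^ t / (4 * L ^ t)) := by
        have := lt_min hs hρ
        gcongr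
    _ = ρ ^ t * s ^ t / (2 * L ^ t) := by
      rw [← hminmax]
      field_simp
      norm_num

theorem card_mul_min_rpow_le (ht : 0 < t) (ht1 : t < 1) (hA : 0 < A) (hL : 0 < L)
    (hθ : 0 < θ) (hθA : 8 * A * θ ^ (1 - t) ≤ 1) {s ρ η : ℝ} (hs : 0 < s) (hρ : 0 < ρ)
    (hη : 0 < η) (hsL : s ≤ θ * L) (hρL : ρ ≤ θ * L) (hηL : 8 * η * L ^ t ≤ 1) {F : Finset X}
    (hF : ∀ z r, ρ ≤ r → (#{P ∈ F | dist P z ≤ r} : ℝ) ≤ #F * (A * r / L + η * r ^ t)) (z : X) :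
    #{P ∈ F | dist P z ≤ ρ + s} * min s ρ ^ t ≤ #F * (ρ ^ t / (2 * L ^ t)) * s ^ t := by
  have : 0 < min s ρ := lt_min hs hρ
  calc _ ≤ #F * (A * (ρ + s) / L + η * (ρ + s) ^ t) * min s ρ ^ t := by
        gcongr
        exact hF z (ρ + s) (by linarith)
    _ = #F * (min s ρ ^ t * (A * (s + ρ) / L + η * (s + ρ) ^ t)) := by
      rw [add_comm ρ]
      ring
    _ ≤ #F * (ρ ^ t * s ^ t / (2 * L ^ t)) := by
      gcongr
      exact min_rpow_mul_le ht ht1 hA hL hθ hθA hs hρ hη hsL hρL hηL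
    _ = _ := by ring

-- Replacing `r i` by `min (r i) ρ` is what keeps this average small even though a single ball of
-- radius larger than `ρ` may meet many of the balls around `F`.
theorem sum_truncated_ballWeight_le (ht : 0 < t) (ht1 : t < 1) (hA : 0 < A) (hL : 0 < L)
    (hθ : 0 < θ) (hθA : 8 * A * θ ^ (1 - t) ≤ 1) (hr : ∀ i, 0 < r i) {ρ η : ℝ} (hρ : 0 < ρ)
    (hη : 0 < η) (hρL : ρ ≤ θ * L) (hηL : 8 * η * L ^ t ≤ 1) {F : Finset X}
    (hFx : ∀ P ∈ F, dist P x + ρ ≤ L)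
    (hF : ∀ z r, ρ ≤ r → (#{P ∈ F | dist P z ≤ r} : ℝ) ≤ #F * (A * r / L + η * r ^ t))
    (hw : ballWeight t z r x L ≤ ENNReal.ofReal ((θ * L) ^ t)) :
    ∑ P ∈ F, ∑' i, {i | dist P (z i) ≤ ρ + r i}.indicator
        (fun i ↦ ENNReal.ofReal (min (r i) ρ ^ t)) i ≤
      #F * ENNReal.ofReal ((θ * ρ) ^ t / 2) := by
  have hterm (i : ι) : ∑ P ∈ F, {i | dist P (z i) ≤ ρ + r i}.indicator
      (fun i ↦ ENNReal.ofReal (min (r i) ρ ^ t)) i ≤ ENNReal.ofReal (#F * (ρ ^ t / (2 * L ^ t))) *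
        {i | dist x (z i) ≤ L + r i}.indicator (fun i ↦ ENNReal.ofReal (r i ^ t)) i := by
    by_cases hi : dist x (z i) ≤ L + r i
    · simp only [Set.indicator_apply, Set.mem_ofPred_eq, if_pos hi]
      rw [← ENNReal.ofReal_mul (by positivity), ← sum_filter, sum_const, nsmul_eq_mul,
        ← ENNReal.ofReal_natCast, ← ENNReal.ofReal_mul (by positivity)]
      exact ENNReal.ofReal_le_ofReal <| card_mul_min_rpow_le ht ht1 hA hL hθ hθA (hr i) hρ hη
        (le_of_ballWeight_le ht hr (by positivity) hw hi) hρL hηL hF (z i)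
    · refine (sum_eq_zero fun P hP ↦ Set.indicator_of_notMem (fun hPi ↦ hi ?_) _).trans_le zero_le
      have := dist_triangle_left x (z i) P
      linarith [hFx P hP, show dist P (z i) ≤ ρ + r i from hPi]
  rw [← Summable.tsum_finsetSum fun _ _ ↦ ENNReal.summable]
  calc _ ≤ ENNReal.ofReal (#F * (ρ ^ t / (2 * L ^ t))) * ballWeight t z r x L :=
        (ENNReal.tsum_le_tsum hterm).trans_eq ENNReal.tsum_mul_left
    _ ≤ ENNReal.ofReal (#F * (ρ ^ t / (2 * L ^ t))) * ENNReal.ofReal ((θ * L) ^ t) := by gcongr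
    _ = #F * ENNReal.ofReal ((θ * ρ) ^ t / 2) := by
      rw [← ENNReal.ofReal_mul (by positivity), ← ENNReal.ofReal_natCast,
        ← ENNReal.ofReal_mul (by positivity), Real.mul_rpow hθ.le hL.le, Real.mul_rpow hθ.le hρ.le]
      congr 1
      field_simp

theorem IsSpread.exists_closedBall {B U : Set X} (hU : IsSpread t A B U) (ht : 0 < t) (ht1 : t < 1)
    (hA : 0 < A) (hθ : 0 < θ) (hθ1 : θ ≤ 1) (hθA : 8 * A * θ ^ (1 - t) ≤ 1) (hr : ∀ i, 0 < r i)
    (hL : 0 < L) (hB : closedBall x L ⊆ B)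
    (hw : ballWeight t z r x L ≤ ENNReal.ofReal ((θ * L) ^ t)) {ε : ℝ} (hε : 0 < ε) :
    ∃ P ρ, 0 < ρ ∧ ρ ≤ ε ∧ dist P x + ρ ≤ L ∧ closedBall P ρ ⊆ U ∧
      ballWeight t z r P ρ ≤ ENNReal.ofReal ((θ * ρ) ^ t) := by
  obtain ⟨η, hη, hηε⟩ : ∃ η, 0 < η ∧ η ≤ min (min ε (θ * L)) (1 / (8 * L ^ t)) :=
    ⟨_, lt_min (lt_min hε (by positivity)) (by positivity), le_rfl⟩
  simp only [le_min_iff] at hηε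
  obtain ⟨⟨hηε, hηθ⟩, hηL⟩ := hηε
  rw [le_div_iff₀ (by positivity)] at hηL
  obtain ⟨F, ρ, hFne, hρ, hρη, hFx, hF⟩ := hU hL hB η hη
  have hsum := sum_truncated_ballWeight_le ht ht1 hA hL hθ hθA hr hρ hη (hρη.trans hηθ)
    (by linarith) (fun P hP ↦ (hFx P hP).1) hF hw
  rw [← nsmul_eq_mul, ← sum_const] at hsum
  obtain ⟨P, hP, hPw⟩ : ∃ P ∈ F, ∑' i, {i | dist P (z i) ≤ ρ + r i}.indicator
      (fun i ↦ ENNReal.ofReal (min (r i) ρ ^ t)) i ≤ ENNReal.ofReal ((θ * ρ) ^ t / 2) := by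
    by_contra! hlt
    exact hsum.not_gt (ENNReal.sum_lt_sum_of_nonempty hFne hlt)
  have hsmall {i : ι} (hi : dist P (z i) ≤ ρ + r i) : r i ≤ ρ := by
    by_contra! hlt
    have hle := (ENNReal.le_tsum i).trans hPw
    simp only [Set.indicator_apply, Set.mem_ofPred_eq, if_pos hi, min_eq_right hlt.le] at hle
    rw [ENNReal.ofReal_le_ofReal_iff (by positivity)] at hle
    have : (θ * ρ) ^ t ≤ ρ ^ t := by
      gcongr
      exact mul_le_of_le_one_left hρ.le hθ1
    linarith [Real.rpow_pos_of_pos hρ t]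
  refine ⟨P, ρ, hρ, hρη.trans hηε, (hFx P hP).1, (hFx P hP).2, ?_⟩
  calc ballWeight t z r P ρ
      = ∑' i, {i | dist P (z i) ≤ ρ + r i}.indicator
          (fun i ↦ ENNReal.ofReal (min (r i) ρ ^ t)) i :=
        tsum_congr fun i ↦ congrFun (Set.indicator_congr fun i hi ↦ by
          rw [min_eq_left (hsmall hi)]) i
    _ ≤ ENNReal.ofReal ((θ * ρ) ^ t / 2) := hPw
    _ ≤ ENNReal.ofReal ((θ * ρ) ^ t) := ENNReal.ofReal_le_ofReal (half_le_self (by positivity))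

theorem nonempty_iInter_closedBall_of_antitone [CompleteSpace X] {c : ℕ → X} {ρ : ℕ → ℝ}
    (hρ : ∀ j, 0 ≤ ρ j) (hanti : Antitone fun j ↦ closedBall (c j) (ρ j))
    (hlim : Tendsto ρ atTop (𝓝 0)) : (⋂ j, closedBall (c j) (ρ j)).Nonempty := by
  refine nonempty_iInter_of_nonempty_biInter (fun _ ↦ isClosed_closedBall)
    (fun _ ↦ isBounded_closedBall) (fun N ↦ ⟨c N, Set.mem_iInter₂.2 fun j hj ↦
      hanti hj (mem_closedBall_self (hρ N))⟩) ?_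
  refine squeeze_zero (fun _ ↦ diam_nonneg) (fun j ↦ diam_closedBall (hρ j)) ?_
  simpa only [mul_zero] using hlim.const_mul 2

theorem exists_mem_iInter_notMem_iUnion_closedBall [CompleteSpace X] {B : Set X} {U : ℕ → Set X}
    (hU : ∀ j, IsSpread t A B (U j)) (ht : 0 < t) (ht1 : t < 1) (hA : 0 < A) (hθ : 0 < θ)
    (hθ1 : θ ≤ 1) (hθA : 8 * A * θ ^ (1 - t) ≤ 1) (hr : ∀ i, 0 < r i) (hL : 0 < L)
    (hB : closedBall x L ⊆ B)
    (hw : ∑' i, ENNReal.ofReal (r i ^ t) ≤ ENNReal.ofReal ((θ * L) ^ t)) :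
    ∃ y ∈ ⋂ j, U j, y ∉ ⋃ i, closedBall (z i) (r i) := by
  let Light := {p : X × ℝ // 0 < p.2 ∧ closedBall p.1 p.2 ⊆ B ∧
    ballWeight t z r p.1 p.2 ≤ ENNReal.ofReal ((θ * p.2) ^ t)}
  have hstep (j : ℕ) (p : Light) : ∃ q : Light, q.1.2 ≤ 1 / (j + 1 : ℝ) ∧
      closedBall q.1.1 q.1.2 ⊆ closedBall p.1.1 p.1.2 ∧ closedBall q.1.1 q.1.2 ⊆ U j := by
    obtain ⟨P, ρ, hρ, hρj, hPρ, hPU, hPw⟩ := (hU j).exists_closedBall ht ht1 hA hθ hθ1 hθA hr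
      p.2.1 p.2.2.1 p.2.2.2 (Nat.one_div_pos_of_nat (n := j))
    have hsub : closedBall P ρ ⊆ closedBall p.1.1 p.1.2 :=
      closedBall_subset_closedBall' (by linarith)
    exact ⟨⟨(P, ρ), hρ, hsub.trans p.2.2.1, hPw⟩, hρj, hsub, hPU⟩
  choose next hnext_small hnext_sub hnext_U using hstep
  let p (j : ℕ) : Light :=
    j.rec ⟨(x, L), hL, hB, (ballWeight_le_tsum t z r x L).trans hw⟩ fun j q ↦ next j q
  have hanti : Antitone fun j ↦ closedBall (p j).1.1 (p j).1.2 :=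
    antitone_nat_of_succ_le fun j ↦ hnext_sub j (p j)
  have hradius : Tendsto (fun j ↦ (p j).1.2) atTop (𝓝 0) :=
    (tendsto_add_atTop_iff_nat 1).1 <| squeeze_zero (fun j ↦ (p (j + 1)).2.1.le)
      (fun j ↦ hnext_small j (p j)) tendsto_one_div_add_atTop_nhds_zero_nat
  obtain ⟨y, hy⟩ := nonempty_iInter_closedBall_of_antitone (fun j ↦ (p j).2.1.le) hanti hradius
  rw [Set.mem_iInter] at hy
  refine ⟨y, Set.mem_iInter.2 fun j ↦ hnext_U j (p j) (hy (j + 1)), fun hyz ↦ ?_⟩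
  obtain ⟨i, hi⟩ := Set.mem_iUnion.1 hyz
  have hri (j : ℕ) : r i ≤ θ * (p j).1.2 := by
    refine le_of_ballWeight_le ht hr (mul_pos hθ (p j).2.1).le (p j).2.2.2 ?_
    have := dist_triangle_left (p j).1.1 (z i) y
    linarith [mem_closedBall.1 (hy j), mem_closedBall.1 hi]
  have hlim : r i ≤ θ * 0 := ge_of_tendsto' (hradius.const_mul θ) hri
  linarith [hr i]

end Avoidance

section Equidistribution

variable {ι : Type*} [Fintype ι]

theorem dnint_eq_norm (r : ℝ) : dnint r = ‖(r : UnitAddCircle)‖ :=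
  UnitAddCircle.norm_eq.symm

theorem measurePreserving_unitAddCircle_pi :
    MeasurePreserving (fun (β : ι → ℝ) i ↦ (β i : UnitAddCircle))
      (volume.restrict (Set.Icc 0 1)) := by
  have hIcc : (volume : Measure (ι → ℝ)).restrict (Set.Icc 0 1) =
      Measure.pi fun _ ↦ volume.restrict (Set.Ioc 0 (0 + 1)) := by
    rw [← Set.pi_univ_Icc, volume_pi, Measure.restrict_pi_pi]
    simp only [Pi.zero_apply, Pi.one_apply, zero_add, restrict_Ioc_eq_restrict_Icc]
  rw [hIcc]
  exact measurePreserving_pi _ _ fun _ ↦ UnitAddCircle.measurePreserving_mk 0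

theorem measurePreserving_sum_zsmul {z : ι → ℤ} (hz : z ≠ 0) :
    MeasurePreserving fun y : ι → UnitAddCircle ↦ ∑ i, z i • y i := by
  classical
  obtain ⟨i, hi⟩ := Function.ne_iff.1 hz
  let φ : (ι → UnitAddCircle) →+ UnitAddCircle :=
    ∑ i, (zsmulAddGroupHom (z i)).comp (Pi.evalAddMonoidHom _ i)
  have hφ : ⇑φ = fun y ↦ ∑ i, z i • y i := by
    ext y
    simp [φ]
  rw [← hφ]
  refine φ.measurePreserving (by rw [hφ]; fun_prop) (fun y ↦ ?_)
    (by simp only [volume_pi, Measure.pi_univ, UnitAddCircle.measure_univ, prod_const_one])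
  obtain ⟨w, hw⟩ : ∃ w, z i • w = y := DivisibleBy.surjective_smul _ ℤ hi y
  refine ⟨Pi.single i w, ?_⟩
  rw [hφ]
  simp [Pi.single_apply, hw]

theorem volume_restrict_dnint_sum_le {z : ι → ℤ} (hz : z ≠ 0) (h : ℝ) :
    volume.restrict (Set.Icc 0 1) {β : ι → ℝ | dnint (∑ i, z i * β i) ≤ h} ≤
      ENNReal.ofReal (2 * h) := by
  have hpre : {β : ι → ℝ | dnint (∑ i, z i * β i) ≤ h} =
      (fun β : ι → ℝ ↦ ∑ i, z i • (β i : UnitAddCircle)) ⁻¹' Metric.closedBall 0 h := by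
    ext β
    simp [dnint_eq_norm]
  have hmp := (measurePreserving_sum_zsmul hz).comp measurePreserving_unitAddCircle_pi
  rw [hpre]
  refine (hmp.measure_preimage measurableSet_closedBall.nullMeasurableSet).trans_le ?_
  rw [AddCircle.volume_closedBall]
  exact ENNReal.ofReal_le_ofReal (min_le_right _ _)

end Equidistribution

section Elimination

variable {ι : Type*} {l l' : ℕ × (ι → ℕ)}

/-- The coefficient by which `(q, x)` is multiplied when the first coordinate is eliminated between
`(q, x)` and `(q', x')`. -/
def eliminationCoeff (l l' : ℕ × (ι → ℕ)) : ℕ := l'.1 / l.1.gcd l'.1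

/-- The result of eliminating the first coordinate between `l = (q, x)` and `l' = (q', x')`. -/
def elimination (l l' : ℕ × (ι → ℕ)) : ι → ℤ :=
  fun i ↦ eliminationCoeff l l' * l.2 i - eliminationCoeff l' l * l'.2 i

theorem eliminationCoeff_mul (l l' : ℕ × (ι → ℕ)) : eliminationCoeff l l' * l.1 = l.1.lcm l'.1 := by
  rw [eliminationCoeff, Nat.div_mul_right_comm (Nat.gcd_dvd_right _ _), mul_comm, Nat.lcm]

theorem eliminationCoeff_mul_swap (l l' : ℕ × (ι → ℕ)) :
    eliminationCoeff l' l * l'.1 = l.1.lcm l'.1 := by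
  rw [eliminationCoeff_mul, Nat.lcm_comm]

theorem coprime_eliminationCoeff (hl : 0 < l.1) :
    (eliminationCoeff l l').Coprime (eliminationCoeff l' l) := by
  rw [eliminationCoeff, eliminationCoeff, Nat.gcd_comm]
  exact Nat.coprime_div_gcd_div_gcd (Nat.gcd_pos_of_pos_right _ hl)

/-- The first coordinate of the point over `β` of the hyperplane `q a + x·β = p`, `l = (q, x)`. -/
noncomputable def hyperplanePoint [Fintype ι] (β : ι → ℝ) (l : ℕ × (ι → ℕ)) (p : ℕ) : ℝ :=
  (p - ∑ i, l.2 i * β i) / l.1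

variable [Fintype ι] {β : ι → ℝ} {p p' : ℕ} {σ : ℝ}

theorem sub_sum_elimination_mul (hl : 0 < l.1) (hl' : 0 < l'.1) :
    ((eliminationCoeff l l' * p - eliminationCoeff l' l * p' : ℤ) : ℝ)
        - ∑ i, elimination l l' i * β i =
      l.1.lcm l'.1 * (hyperplanePoint β l p - hyperplanePoint β l' p') := by
  have h := congrArg (Nat.cast (R := ℝ)) (eliminationCoeff_mul l l')
  have h' := congrArg (Nat.cast (R := ℝ)) (eliminationCoeff_mul_swap l l')
  push_cast at h h'
  have hp : p - ∑ i, l.2 i * β i = l.1 * hyperplanePoint β l p := by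
    rw [hyperplanePoint, mul_div_cancel₀ _ (by positivity)]
  have hp' : p' - ∑ i, l'.2 i * β i = l'.1 * hyperplanePoint β l' p' := by
    rw [hyperplanePoint, mul_div_cancel₀ _ (by positivity)]
  simp only [elimination, Int.cast_sub, Int.cast_mul, Int.cast_natCast, sub_mul, sum_sub_distrib,
    mul_assoc, ← mul_sum]
  linear_combination eliminationCoeff l l' * hp - eliminationCoeff l' l * hp'
    + hyperplanePoint β l p * h - hyperplanePoint β l' p' * h'

theorem abs_sub_sum_elimination_mul_le (hl : 0 < l.1) (hl' : 0 < l'.1)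
    (h : dist (hyperplanePoint β l p) (hyperplanePoint β l' p') ≤ σ) :
    |((eliminationCoeff l l' * p - eliminationCoeff l' l * p' : ℤ) : ℝ)
        - ∑ i, elimination l l' i * β i| ≤ l.1.lcm l'.1 * σ := by
  rw [sub_sum_elimination_mul hl hl', abs_mul, Nat.abs_cast]
  gcongr
  exact h

theorem dnint_sum_elimination_mul_le (hl : 0 < l.1) (hl' : 0 < l'.1)
    (h : dist (hyperplanePoint β l p) (hyperplanePoint β l' p') ≤ σ) :
    dnint (∑ i, elimination l l' i * β i) ≤ l.1.lcm l'.1 * σ := by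
  refine (round_le _ (eliminationCoeff l l' * p - eliminationCoeff l' l * p')).trans ?_
  rw [abs_sub_comm]
  exact abs_sub_sum_elimination_mul_le hl hl' h

-- The two hyperplanes have to coincide once the combination eliminating `a` vanishes identically;
-- without `q ∤ p` they could still have distinct, proportional equations.
theorem eq_of_dist_hyperplanePoint_le_of_elimination_eq_zero (hl : l.1.Prime) (hl' : l'.1.Prime)
    (hp : ¬l.1 ∣ p) (hp' : ¬l'.1 ∣ p') (hσ : l.1.lcm l'.1 * σ < 1)
    (h : dist (hyperplanePoint β l p) (hyperplanePoint β l' p') ≤ σ)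
    (h0 : elimination l l' = 0) : (l', p') = (l, p) := by
  have hN : eliminationCoeff l l' * p = eliminationCoeff l' l * p' := by
    have := (abs_sub_sum_elimination_mul_le hl.pos hl'.pos h).trans_lt hσ
    simp only [h0, Pi.zero_apply, Int.cast_zero, zero_mul, sum_const_zero, sub_zero] at this
    zify
    exact sub_eq_zero.1 (Int.abs_lt_one_iff.1 (by exact_mod_cast this))
  have hcop := coprime_eliminationCoeff (l' := l') hl.pos
  have coeff_eq_one {q a b c : ℕ} (hq : q.Prime) (hc : ¬q ∣ c) (hab : a.Coprime b) (ha : a ∣ q)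
      (hbc : a ∣ b * c) : a = 1 :=
    (hq.eq_one_or_self_of_dvd a ha).resolve_right fun h ↦ hc (h ▸ hab.dvd_of_dvd_mul_left hbc)
  have h1 : eliminationCoeff l l' = 1 := coeff_eq_one hl' hp' hcop
    (Nat.div_dvd_of_dvd (Nat.gcd_dvd_right _ _)) ⟨p, hN.symm⟩
  have h1' : eliminationCoeff l' l = 1 := coeff_eq_one hl hp hcop.symm
    (Nat.div_dvd_of_dvd (Nat.gcd_dvd_right _ _)) ⟨p', hN⟩
  have hq := (eliminationCoeff_mul l l').trans (eliminationCoeff_mul_swap l l').symm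
  rw [h1, h1', one_mul, one_mul] at hq hN
  refine Prod.ext (Prod.ext hq.symm (funext fun i ↦ ?_)) hN.symm
  have := congrFun h0 i
  rw [elimination, h1, h1'] at this
  simp only [Pi.zero_apply, Nat.cast_one, one_mul, sub_eq_zero, Nat.cast_inj] at this
  exact this.symm

theorem card_closeNumerators_le (hl : 0 < l.1) (hl' : 0 < l'.1) (hσ : l.1.lcm l'.1 * σ ≤ 1 / 4)
    (M : ℕ) :
    #{pp ∈ range M ×ˢ range M | dist (hyperplanePoint β l pp.1) (hyperplanePoint β l' pp.2) ≤ σ} ≤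
      M / eliminationCoeff l' l + 1 := by
  set a := eliminationCoeff l l'
  set b := eliminationCoeff l' l
  have hab : a.Coprime b := coprime_eliminationCoeff hl
  have hb : 0 < b := Nat.div_pos (Nat.gcd_le_right _ hl) (Nat.gcd_pos_of_pos_right _ hl)
  rw [← card_range (M / b + 1)]
  refine card_le_card_of_injOn (fun pp ↦ pp.1 / b) (fun pp hpp ↦ ?_) fun pp hpp qq hqq hdiv ↦ ?_
  · simp only [coe_filter, mem_product, mem_range, Set.mem_ofPred_eq] at hpp
    exact mem_coe.2 <| mem_range.2 <| Nat.lt_succ_of_le <| Nat.div_le_div_right hpp.1.1.le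
  · have hp := abs_sub_sum_elimination_mul_le hl hl' (mem_filter.1 hpp).2
    have hq := abs_sub_sum_elimination_mul_le hl hl' (mem_filter.1 hqq).2
    have hN : (a * pp.1 - b * pp.2 : ℤ) = a * qq.1 - b * qq.2 := by
      rw [← sub_eq_zero, ← Int.abs_lt_one_iff]
      have := (abs_sub _ _).trans (add_le_add hp hq)
      rw [sub_sub_sub_cancel_right, ← Int.cast_sub, ← Int.cast_abs] at this
      rw [← Int.cast_lt (R := ℝ), Int.cast_one]
      exact this.trans_lt (by linarith)
    have hmod : pp.1 ≡ qq.1 [MOD b] := by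
      rw [← Int.natCast_modEq_iff, Int.modEq_comm, Int.modEq_iff_dvd]
      refine (Nat.isCoprime_iff_coprime.2 hab.symm).dvd_of_dvd_mul_left
        (⟨pp.2 - qq.2, by linear_combination hN⟩ : (b : ℤ) ∣ a * (pp.1 - qq.1))
    have h1 : pp.1 = qq.1 := by
      rw [← Nat.div_add_mod pp.1 b, ← Nat.div_add_mod qq.1 b, hmod]
      simp only at hdiv
      rw [hdiv]
    refine Prod.ext h1 ?_
    rw [h1] at hN
    exact Nat.eq_of_mul_eq_mul_left hb (by exact_mod_cast sub_right_injective hN)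

end Elimination

section ClosePairs

open Filter Topology

/-- The vectors `l = (q, x)` with `q` a prime in `(Q, 4 Q]` and `x ∈ [0, Q) ^ k`. -/
def primeLabels (k Q : ℕ) : Finset (ℕ × (Fin k → ℕ)) :=
  {q ∈ Ioc Q (4 * Q) | q.Prime} ×ˢ Fintype.piFinset fun _ ↦ range Q

/-- An upper bound for the number of points `hyperplanePoint β l p` with `l ∈ primeLabels k Q` and
`p < (k + 5) Q` not divisible by `q` that are within `σ` of another such point. It is more
convenient than that number because each of its terms is the indicator of an event
`dnint (z·β) ≤ h` of known probability. -/
noncomputable def closePairBound (k Q : ℕ) (σ : ℝ) (β : Fin k → ℝ) : ENNReal :=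
  ∑ ll ∈ {ll ∈ primeLabels k Q ×ˢ primeLabels k Q | elimination ll.1 ll.2 ≠ 0},
    {β : Fin k → ℝ | dnint (∑ i, elimination ll.1 ll.2 i * β i) ≤ ll.1.1.lcm ll.2.1 * σ}.indicator
      (fun _ ↦ (((k + 5) * Q / eliminationCoeff ll.2 ll.1 + 1 : ℕ) : ENNReal)) β

/-- The scale at which most of the points with labels in `primeLabels k (2 ^ K)` are isolated, for
almost all `β`. -/
noncomputable def separation (k K : ℕ) : ℝ := 1 / ((2 ^ K) ^ (k + 2) * (K + 1) ^ 4)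

variable {k Q : ℕ} {l l' : ℕ × (Fin k → ℕ)} {σ : ℝ}

theorem mem_primeLabels :
    l ∈ primeLabels k Q ↔ (Q < l.1 ∧ l.1 ≤ 4 * Q) ∧ l.1.Prime ∧ ∀ i, l.2 i < Q := by
  simp only [primeLabels, mem_product, mem_filter, mem_Ioc, Fintype.mem_piFinset, mem_range,
    and_assoc]

theorem card_primeLabels (k Q : ℕ) :
    #(primeLabels k Q) = #{q ∈ Ioc Q (4 * Q) | q.Prime} * Q ^ k := by
  rw [primeLabels, card_product, Fintype.card_piFinset_const, card_range]

theorem card_primeLabels_le (k Q : ℕ) : #(primeLabels k Q) ≤ 3 * Q ^ (k + 1) := by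
  rw [card_primeLabels, pow_succ', ← mul_assoc]
  gcongr
  refine (card_filter_le _ _).trans_eq ?_
  rw [Nat.card_Ioc]
  omega

theorem lcm_le_of_mem_primeLabels (hl : l ∈ primeLabels k Q) (hl' : l' ∈ primeLabels k Q) :
    l.1.lcm l'.1 ≤ 16 * Q ^ 2 := by
  rw [mem_primeLabels] at hl hl'
  calc l.1.lcm l'.1 ≤ l.1 * l'.1 := Nat.lcm_le_mul hl.2.1.pos hl'.2.1.pos
    _ ≤ 4 * Q * (4 * Q) := Nat.mul_le_mul hl.1.2 hl'.1.2
    _ = 16 * Q ^ 2 := by ring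

theorem div_eliminationCoeff_add_one_mul_lcm_le (hl : l ∈ primeLabels k Q)
    (hl' : l' ∈ primeLabels k Q) :
    ((k + 5) * Q / eliminationCoeff l' l + 1) * l.1.lcm l'.1 ≤ 4 * (k + 9) * Q ^ 2 := by
  rw [mem_primeLabels] at hl hl'
  rw [← eliminationCoeff_mul_swap, ← mul_assoc]
  set b := eliminationCoeff l' l
  have hb : b ≤ 4 * Q := (Nat.div_le_self _ _).trans hl.1.2
  calc ((k + 5) * Q / b + 1) * b * l'.1 ≤ ((k + 5) * Q + 4 * Q) * (4 * Q) := by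
        gcongr
        · rw [add_one_mul]
          exact add_le_add (Nat.div_mul_le_self _ _) hb
        · exact hl'.1.2
    _ = 4 * (k + 9) * Q ^ 2 := by ring

theorem measurable_dnint : Measurable dnint := by
  simp only [funext dnint_eq_norm]
  exact (AddCircle.measurable_mk'.norm : Measurable fun r : ℝ ↦ ‖(r : UnitAddCircle)‖)

theorem measurableSet_dnint_sum_le (z : Fin k → ℤ) (h : ℝ) :
    MeasurableSet {β : Fin k → ℝ | dnint (∑ i, z i * β i) ≤ h} :=
  measurableSet_le (measurable_dnint.comp (by fun_prop)) measurable_const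

theorem measurable_closePairBound (k Q : ℕ) (σ : ℝ) : Measurable (closePairBound k Q σ) :=
  Finset.measurable_fun_sum _ fun _ _ ↦
    measurable_const.indicator (measurableSet_dnint_sum_le _ _)

theorem lintegral_closePairBound_le (k Q : ℕ) (hσ : 0 ≤ σ) :
    ∫⁻ β in Set.Icc 0 1, closePairBound k Q σ β ≤
      ENNReal.ofReal (72 * (k + 9) * Q ^ (2 * k + 4) * σ) := by
  unfold closePairBound
  rw [lintegral_finsetSum _ fun _ _ ↦ measurable_const.indicator (measurableSet_dnint_sum_le _ _)]
  have hterm (ll) (hll : ll ∈ {ll ∈ primeLabels k Q ×ˢ primeLabels k Q |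
      elimination ll.1 ll.2 ≠ 0}) :
      ∫⁻ β in Set.Icc 0 1, {β : Fin k → ℝ | dnint (∑ i, elimination ll.1 ll.2 i * β i) ≤
        ll.1.1.lcm ll.2.1 * σ}.indicator
          (fun _ ↦ (((k + 5) * Q / eliminationCoeff ll.2 ll.1 + 1 : ℕ) : ENNReal)) β ≤
      ENNReal.ofReal (8 * (k + 9) * Q ^ 2 * σ) := by
    simp only [mem_filter, mem_product] at hll
    rw [lintegral_indicator_const (measurableSet_dnint_sum_le _ _)]
    calc _ ≤ (((k + 5) * Q / eliminationCoeff ll.2 ll.1 + 1 : ℕ) : ENNReal) *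
          ENNReal.ofReal (2 * (ll.1.1.lcm ll.2.1 * σ)) := by
          gcongr
          exact volume_restrict_dnint_sum_le hll.2 _
      _ ≤ _ := by
        rw [← ENNReal.ofReal_natCast, ← ENNReal.ofReal_mul (by positivity)]
        refine ENNReal.ofReal_le_ofReal ?_
        have := Nat.cast_le (α := ℝ).2 (div_eliminationCoeff_add_one_mul_lcm_le hll.1.1 hll.1.2)
        push_cast at this ⊢
        linear_combination 2 * σ * this
  have hcard : #{ll ∈ primeLabels k Q ×ˢ primeLabels k Q | elimination ll.1 ll.2 ≠ 0} ≤
      (3 * Q ^ (k + 1)) ^ 2 := by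
    refine (card_filter_le _ _).trans ?_
    rw [card_product, sq]
    exact Nat.mul_le_mul (card_primeLabels_le k Q) (card_primeLabels_le k Q)
  refine (sum_le_card_nsmul _ _ _ hterm).trans ?_
  rw [nsmul_eq_mul, ← ENNReal.ofReal_natCast, ← ENNReal.ofReal_mul (by positivity)]
  refine ENNReal.ofReal_le_ofReal ?_
  calc _ ≤ ((3 * Q ^ (k + 1)) ^ 2 : ℕ) * (8 * (k + 9) * Q ^ 2 * σ) := by gcongr
    _ = _ := by
      push_cast
      ring

theorem separation_pos (k K : ℕ) : 0 < separation k K := by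
  unfold separation
  positivity

theorem volume_restrict_lt_closePairBound_le (k K : ℕ) :
    volume.restrict (Set.Icc 0 1) {β | ENNReal.ofReal ((2 ^ K) ^ (k + 2) / (K + 1) ^ 2) ≤
      closePairBound k (2 ^ K) (separation k K) β} ≤
      ENNReal.ofReal (72 * (k + 9) * (1 / (K + 1) ^ 2)) := by
  have hpos : (0 : ℝ) < (2 ^ K) ^ (k + 2) / (K + 1) ^ 2 := by positivity
  calc _ ≤ (∫⁻ β in Set.Icc 0 1, closePairBound k (2 ^ K) (separation k K) β) /
        ENNReal.ofReal ((2 ^ K) ^ (k + 2) / (K + 1) ^ 2) :=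
        meas_ge_le_lintegral_div (measurable_closePairBound _ _ _).aemeasurable
          (ENNReal.ofReal_pos.2 hpos).ne' ENNReal.ofReal_ne_top
    _ ≤ _ := ENNReal.div_le_div_right (lintegral_closePairBound_le _ _ (separation_pos k K).le) _
    _ = _ := by
      rw [← ENNReal.ofReal_div_of_pos hpos, separation]
      congr 1
      push_cast
      rw [show 2 * k + 4 = (k + 2) + (k + 2) by ring, pow_add]
      field_simp

theorem ae_eventually_closePairBound_lt (k : ℕ) :
    ∀ᵐ β ∂volume.restrict (Set.Icc 0 1), ∀ᶠ K : ℕ in atTop,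
      closePairBound k (2 ^ K) (separation k K) β <
        ENNReal.ofReal ((2 ^ K) ^ (k + 2) / (K + 1) ^ 2) := by
  have hsum : Summable fun K : ℕ ↦ 72 * ((k : ℝ) + 9) * (1 / ((K : ℝ) + 1) ^ 2) :=
    (((summable_nat_add_iff 1).2 (Real.summable_one_div_nat_pow.2 one_lt_two)).congr fun K ↦ by
      rw [Nat.cast_add_one]).mul_left _
  filter_upwards [ae_eventually_notMem (ne_top_of_le_ne_top hsum.tsum_ofReal_ne_top
    (ENNReal.tsum_le_tsum (volume_restrict_lt_closePairBound_le k)))] with β hβ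
  exact hβ.mono fun K hK ↦ not_le.1 hK

end ClosePairs

section Counting

open Filter

theorem card_filter_dist_le_of_separated {ι : Type*} {s : Finset ι} {f : ι → ℝ} {σ : ℝ} (hσ : 0 < σ)
    (hs : (s : Set ι).Pairwise fun i j ↦ σ ≤ dist (f i) (f j)) (z : ℝ) {r : ℝ} (hr : 0 ≤ r) :
    (#{i ∈ s | dist (f i) z ≤ r} : ℝ) ≤ 1 + 2 * r / σ := by
  have hcard : #{i ∈ s | dist (f i) z ≤ r} ≤ #(Icc 0 ⌊2 * r / σ⌋) := by
    refine card_le_card_of_injOn (fun i ↦ ⌊(f i - (z - r)) / σ⌋) (fun i hi ↦ ?_)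
      fun i hi j hj hij ↦ ?_
    · have hi := abs_le.1 (Real.dist_eq _ _ ▸ (mem_filter.1 hi).2)
      refine mem_coe.2 (mem_Icc.2 ⟨Int.floor_nonneg.2 (div_nonneg ?_ hσ.le), Int.floor_le_floor ?_⟩)
      · linarith
      · gcongr
        linarith
    · by_contra hne
      refine (hs (mem_filter.1 hi).1 (mem_filter.1 hj).1 hne).not_gt ?_
      have := Int.abs_sub_lt_one_of_floor_eq_floor hij
      rwa [← sub_div, sub_sub_sub_cancel_right, abs_div, abs_of_pos hσ, div_lt_one hσ] at this
  have hfloor : 0 ≤ ⌊2 * r / σ⌋ + 1 - 0 := by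
    have := Int.floor_nonneg.2 (by positivity : 0 ≤ 2 * r / σ)
    lia
  rw [Int.card_Icc, ← Nat.cast_le (α := ℤ), Int.toNat_of_nonneg hfloor] at hcard
  calc (#{i ∈ s | dist (f i) z ≤ r} : ℝ) ≤ (⌊2 * r / σ⌋ + 1 - 0 : ℤ) := mod_cast hcard
    _ ≤ 1 + 2 * r / σ := by
      push_cast
      linarith [Int.floor_le (2 * r / σ)]

theorem sub_one_le_card_filter_mem_Icc {M : ℕ} {u v : ℝ} (hu : 0 ≤ u) (huv : u ≤ v) (hv : v < M) :
    v - u - 1 ≤ #{p ∈ range M | Nat.cast p ∈ Set.Icc u v} := by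
  have hsub : Icc ⌈u⌉₊ ⌊v⌋₊ ⊆ {p ∈ range M | Nat.cast p ∈ Set.Icc u v} := fun p hp ↦ by
    rw [mem_Icc, Nat.ceil_le, Nat.le_floor_iff (hu.trans huv)] at hp
    exact mem_filter.2 ⟨mem_range.2 (mod_cast hp.2.trans_lt hv), hp⟩
  have hcard := card_le_card hsub
  rw [Nat.card_Icc, tsub_le_iff_right, ← Nat.cast_le (α := ℝ)] at hcard
  push_cast at hcard
  linarith [Nat.ceil_lt_add_one hu, Nat.lt_floor_add_one v]

theorem sub_three_le_card_filter_not_dvd {M q : ℕ} (hq : 0 < q) {u v : ℝ} (hu : 0 ≤ u) (huv : u ≤ v)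
    (hv : v < M) (hvq : v - u ≤ q) :
    v - u - 3 ≤ #{p ∈ range M | ¬q ∣ p ∧ Nat.cast p ∈ Set.Icc u v} := by
  have hdvd : (#{p ∈ range M | Nat.cast p ∈ Set.Icc u v ∧ q ∣ p} : ℝ) ≤ 2 := by
    have hsep : (({p ∈ range M | q ∣ p} : Finset ℕ) : Set ℕ).Pairwise fun p p' ↦
        (q : ℝ) ≤ dist (p : ℝ) p' := fun p hp p' hp' hne ↦ by
      have hd : (q : ℤ) ∣ |(p : ℤ) - p'| := (dvd_abs _ _).2 <|
        dvd_sub (Int.natCast_dvd_natCast.2 (mem_filter.1 hp).2)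
          (Int.natCast_dvd_natCast.2 (mem_filter.1 hp').2)
      have := Int.le_of_dvd (abs_pos.2 (sub_ne_zero.2 (mod_cast hne))) hd
      exact (by exact_mod_cast this : (q : ℝ) ≤ |(p : ℝ) - p'|)
    have hq' : (0 : ℝ) < q := mod_cast hq
    calc (#{p ∈ range M | Nat.cast p ∈ Set.Icc u v ∧ q ∣ p} : ℝ)
      _ ≤ #{p ∈ {p ∈ range M | q ∣ p} | dist (Nat.cast p) ((u + v) / 2) ≤ (v - u) / 2} := by
          rw [filter_filter]
          refine Nat.cast_le.2 (card_le_card (monotone_filter_right _ ?_))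
          exact fun p _ ⟨hp, hqp⟩ ↦ ⟨hqp, abs_le.2 ⟨by linarith [hp.1], by linarith [hp.2]⟩⟩
      _ ≤ 1 + 2 * ((v - u) / 2) / q := card_filter_dist_le_of_separated hq' hsep _ (by linarith)
      _ ≤ 1 + 1 := by
        gcongr
        rw [div_le_one hq']
        linarith
      _ = 2 := by norm_num
  have hsplit := congrArg (Nat.cast (R := ℝ)) <|
    card_filter_add_card_filter_not (s := {p ∈ range M | Nat.cast p ∈ Set.Icc u v}) (q ∣ ·)
  rw [filter_filter, filter_filter, Nat.cast_add] at hsplit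
  simp only [and_comm (b := ¬q ∣ _)] at hsplit
  linarith [sub_one_le_card_filter_mem_Icc hu huv hv]

theorem sum_mul_mem_Icc {k Q : ℕ} {x : Fin k → ℕ} (hx : ∀ i, x i < Q) {β : Fin k → ℝ}
    (hβ : β ∈ Set.Icc 0 1) : ∑ i, x i * β i ∈ Set.Icc (0 : ℝ) (k * Q) := by
  refine ⟨sum_nonneg fun i _ ↦ mul_nonneg (Nat.cast_nonneg _) (hβ.1 i), ?_⟩
  refine (sum_le_card_nsmul _ _ (Q : ℝ) fun i _ ↦ ?_).trans_eq ?_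
  · exact mul_le_of_le_one_right (Nat.cast_nonneg _) (hβ.2 i) |>.trans (mod_cast (hx i).le)
  · simp

theorem mul_div_two_le_card_hyperplanePoint_mem_Icc {k Q : ℕ} {β : Fin k → ℝ} (hβ : β ∈ Set.Icc 0 1)
    {l : ℕ × (Fin k → ℕ)} (hl : l ∈ primeLabels k Q) {u v : ℝ} (hu : 0 ≤ u) (hv : v ≤ 1)
    (hQ : 6 ≤ Q * (v - u)) :
    Q * (v - u) / 2 ≤
      #{p ∈ range ((k + 5) * Q) | ¬l.1 ∣ p ∧ hyperplanePoint β l p ∈ Set.Icc u v} := by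
  rw [mem_primeLabels] at hl
  obtain ⟨⟨hql, hqu⟩, hprime, hx⟩ := hl
  have hql' : (Q : ℝ) ≤ l.1 := mod_cast hql.le
  have hqu' : (l.1 : ℝ) ≤ 4 * Q := mod_cast hqu
  have hq : (0 : ℝ) < l.1 := mod_cast hprime.pos
  have huv : 0 < v - u := pos_of_mul_pos_right (by linarith) Q.cast_nonneg
  obtain ⟨hS0, hS⟩ := sum_mul_mem_Icc hx hβ
  set S := ∑ i, l.2 i * β i
  have hmem (p : ℕ) : hyperplanePoint β l p ∈ Set.Icc u v ↔
      (p : ℝ) ∈ Set.Icc (u * l.1 + S) (v * l.1 + S) := by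
    rw [hyperplanePoint, Set.mem_Icc, Set.mem_Icc, le_div_iff₀ hq, div_le_iff₀ hq,
      le_sub_iff_add_le, sub_le_iff_le_add]
  simp only [hmem]
  calc Q * (v - u) / 2 ≤ v * l.1 + S - (u * l.1 + S) - 3 := by
        linarith [mul_le_mul_of_nonneg_right hql' huv.le]
    _ ≤ _ := by
      refine sub_three_le_card_filter_not_dvd hprime.pos (by positivity) ?_ ?_ ?_
      · gcongr
        linarith
      · push_cast
        linarith [mul_le_of_le_one_left hq.le hv]
      · linarith [mul_le_of_le_one_left hq.le (by linarith : v - u ≤ 1)]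

theorem eventually_le_card_primes_mul_log :
    ∀ᶠ N : ℕ in atTop, (N : ℝ) ≤ #{q ∈ Ioc N (4 * N) | q.Prime} * Real.log (4 * N) := by
  have hlog : ∀ᶠ N : ℕ in atTop, Real.log (4 * N) ≤ √(4 * N) / 100 ∧
      Real.log (4 * N + 1) ≤ √(4 * N + 1) / 100 := by
    have h : ∀ᶠ y : ℝ in atTop, Real.log y ≤ √y / 100 := by
      filter_upwards [(isLittleO_log_rpow_atTop (r := 1 / 2) (by norm_num)).bound
        (by norm_num : (0 : ℝ) < 1 / 100), eventually_ge_atTop 1] with y hy hy1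
      rw [← Real.sqrt_eq_rpow, Real.norm_of_nonneg (Real.log_nonneg hy1),
        Real.norm_of_nonneg (Real.sqrt_nonneg y)] at hy
      linarith
    have hN := tendsto_natCast_atTop_atTop (R := ℝ).const_mul_atTop (by norm_num : (0 : ℝ) < 4)
    exact (hN.eventually h).and ((tendsto_atTop_add_const_right _ 1 hN).eventually h)
  filter_upwards [hlog, eventually_ge_atTop 1] with N ⟨h1, h2⟩ hN
  have hN' : (1 : ℝ) ≤ N := mod_cast hN
  have hθ : Chebyshev.theta (4 * N) - Chebyshev.theta N ≤
      #{q ∈ Ioc N (4 * N) | q.Prime} * Real.log (4 * N) := by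
    have hunion : Chebyshev.theta (4 * N : ℕ) =
        Chebyshev.theta N + ∑ q ∈ Ioc N (4 * N) with q.Prime, Real.log q := by
      simp only [Chebyshev.theta, Nat.floor_natCast]
      rw [← Ioc_union_Ioc_eq_Ioc N.zero_le (by lia : N ≤ 4 * N), filter_union, sum_union]
      exact disjoint_filter_filter (Ioc_disjoint_Ioc_of_le le_rfl)
    push_cast at hunion
    rw [hunion, add_sub_cancel_left, ← nsmul_eq_mul]
    refine sum_le_card_nsmul _ _ _ fun q hq ↦ ?_
    simp only [mem_filter, mem_Ioc] at hq
    exact Real.log_le_log (mod_cast hq.2.pos) (mod_cast hq.1.2)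
  have h4 := Chebyshev.theta_ge (4 * N)
  push_cast at h4
  have hN4 := Chebyshev.theta_le_log4_mul_x N.cast_nonneg
  rw [show (4 : ℝ) = 2 ^ 2 by norm_num, Real.log_pow, Nat.cast_ofNat] at hN4
  have hsq := Real.mul_self_sqrt (by positivity : (0 : ℝ) ≤ 4 * N)
  have hsqrt : √(4 * N + 1) ≤ 4 * N + 1 := Real.sqrt_le_iff.2 ⟨by linarith, by nlinarith⟩
  have herr : √(4 * N) * Real.log (4 * N) ≤ √(4 * N) * (√(4 * N) / 100) := by gcongr
  have hlog2 := mul_le_mul_of_nonneg_right Real.log_two_gt_d9.le N.cast_nonneg (α := ℝ)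
  linarith

theorem eventually_two_pow_le_card_primes_mul :
    ∀ᶠ K : ℕ in atTop, (2 : ℝ) ^ K ≤ #{q ∈ Ioc (2 ^ K) (4 * 2 ^ K) | q.Prime} * (K + 1) := by
  filter_upwards [(tendsto_pow_atTop_atTop_of_one_lt one_lt_two).eventually
    eventually_le_card_primes_mul_log, eventually_ge_atTop 2] with K hK hK2
  push_cast at hK
  refine hK.trans (mul_le_mul_of_nonneg_left ?_ (Nat.cast_nonneg _))
  have hK2' : (2 : ℝ) ≤ K := mod_cast hK2
  rw [show (4 : ℝ) * 2 ^ K = 2 ^ (K + 2) by ring, Real.log_pow]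
  push_cast
  linarith [mul_le_mul_of_nonneg_left Real.log_two_lt_d9.le (by positivity : (0 : ℝ) ≤ K + 2)]

theorem eventually_mul_pow_le_two_pow_rpow (C : ℝ) (j : ℕ) {δ : ℝ} (hδ : 0 < δ) :
    ∀ᶠ K : ℕ in atTop, C * (K + 1) ^ j ≤ ((2 : ℝ) ^ K) ^ δ := by
  have h2 : (1 : ℝ) < 2 ^ δ := Real.one_lt_rpow one_lt_two hδ
  have hbound := ((isLittleO_pow_const_const_pow_of_one_lt (R := ℝ) j h2).const_mul_left C).bound
    (by positivity : (0 : ℝ) < 1 / 2 ^ δ)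
  filter_upwards [(tendsto_add_atTop_nat 1).eventually hbound] with K hK
  refine (Real.le_norm_self _).trans ?_
  rw [Nat.cast_add_one, Real.norm_of_nonneg (by positivity : (0 : ℝ) ≤ (2 ^ δ) ^ (K + 1))] at hK
  refine hK.trans_eq ?_
  rw [pow_succ, one_div_mul_eq_div, mul_div_cancel_right₀ _ (by positivity),
    Real.rpow_pow_comm zero_le_two]

end Counting

section IsolatedPairs

variable {k Q : ℕ} {β : Fin k → ℝ} {σ u v : ℝ}

/-- The pairs `(l, p)`, `l = (q, x) ∈ primeLabels k Q`, for which the hyperplane `q a + x·β = p`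
meets the line over `β` between `u` and `v`, `p` being taken prime to `q`. -/
noncomputable def admissiblePairs (Q : ℕ) (β : Fin k → ℝ) (u v : ℝ) :
    Finset ((ℕ × (Fin k → ℕ)) × ℕ) :=
  {ω ∈ primeLabels k Q ×ˢ range ((k + 5) * Q) |
    ¬ω.1.1 ∣ ω.2 ∧ hyperplanePoint β ω.1 ω.2 ∈ Set.Icc u v}

/-- The admissible pairs whose point is at distance more than `σ` from those of all others. -/
noncomputable def isolatedPairs (Q : ℕ) (σ : ℝ) (β : Fin k → ℝ) (u v : ℝ) :
    Finset ((ℕ × (Fin k → ℕ)) × ℕ) :=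
  {ω ∈ admissiblePairs Q β u v | ∀ ω' ∈ admissiblePairs Q β u v,
    dist (hyperplanePoint β ω.1 ω.2) (hyperplanePoint β ω'.1 ω'.2) ≤ σ → ω' = ω}

theorem card_filter_product {α γ : Type*} (s : Finset α) (t : Finset γ) (P : α × γ → Prop)
    [DecidablePred P] : #{x ∈ s ×ˢ t | P x} = ∑ a ∈ s, #{b ∈ t | P (a, b)} := by
  simp only [card_filter, sum_product]

theorem card_primeLabels_mul_le_card_admissiblePairs (hβ : β ∈ Set.Icc 0 1) (hu : 0 ≤ u)
    (hv : v ≤ 1) (hQ : 6 ≤ Q * (v - u)) :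
    #(primeLabels k Q) * (Q * (v - u) / 2) ≤ #(admissiblePairs Q β u v) := by
  rw [admissiblePairs, card_filter_product, Nat.cast_sum, ← nsmul_eq_mul]
  exact card_nsmul_le_sum _ _ _ fun l hl ↦
    mul_div_two_le_card_hyperplanePoint_mem_Icc hβ hl hu hv hQ

theorem one_div_le_dist_hyperplanePoint {l : ℕ × (Fin k → ℕ)} (hl : l ∈ primeLabels k Q) {p p' : ℕ}
    (hp : p ≠ p') : 1 / (4 * Q : ℝ) ≤ dist (hyperplanePoint β l p) (hyperplanePoint β l p') := by
  obtain ⟨⟨-, hq⟩, hprime, -⟩ := mem_primeLabels.1 hl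
  have hq0 : (0 : ℝ) < l.1 := mod_cast hprime.pos
  rw [hyperplanePoint, hyperplanePoint, Real.dist_eq, ← sub_div, sub_sub_sub_cancel_right, abs_div,
    Nat.abs_cast]
  gcongr
  · exact_mod_cast Int.one_le_abs (sub_ne_zero.2 (mod_cast hp) : (p : ℤ) - p' ≠ 0)
  · exact_mod_cast hq

theorem card_filter_admissiblePairs_le (hQ : 0 < Q) (z : ℝ) {r : ℝ} (hr : 0 ≤ r) :
    (#{ω ∈ admissiblePairs Q β u v | dist (hyperplanePoint β ω.1 ω.2) z ≤ r} : ℝ) ≤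
      #(primeLabels k Q) * (1 + 8 * (Q * r)) := by
  rw [admissiblePairs, filter_filter, card_filter_product, Nat.cast_sum, ← nsmul_eq_mul]
  refine sum_le_card_nsmul _ _ _ fun l hl ↦ ?_
  calc _ ≤ (#{p ∈ range ((k + 5) * Q) | dist (hyperplanePoint β l p) z ≤ r} : ℝ) :=
        Nat.cast_le.2 (card_le_card (monotone_filter_right _ fun p _ hp ↦ hp.2))
    _ ≤ 1 + 2 * r / (1 / (4 * Q)) := card_filter_dist_le_of_separated (by positivity)
        (fun p _ p' _ hp ↦ one_div_le_dist_hyperplanePoint hl hp) z hr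
    _ = 1 + 8 * (Q * r) := by field_simp; ring

theorem isolatedPairs_subset : isolatedPairs Q σ β u v ⊆ admissiblePairs Q β u v :=
  filter_subset _ _

theorem lt_dist_of_mem_isolatedPairs {ω ω' : (ℕ × (Fin k → ℕ)) × ℕ}
    (hω : ω ∈ isolatedPairs Q σ β u v) (hω' : ω' ∈ isolatedPairs Q σ β u v) (h : ω ≠ ω') :
    σ < dist (hyperplanePoint β ω.1 ω.2) (hyperplanePoint β ω'.1 ω'.2) := by
  by_contra! hle
  exact h ((mem_filter.1 hω).2 ω' (mem_filter.1 hω').1 hle).symm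

theorem card_filter_isolatedPairs_le (hσ : 0 < σ) (z : ℝ) {r : ℝ} (hr : 0 ≤ r) :
    (#{ω ∈ isolatedPairs Q σ β u v | dist (hyperplanePoint β ω.1 ω.2) z ≤ r} : ℝ) ≤
      1 + 2 * r / σ :=
  card_filter_dist_le_of_separated hσ
    (fun _ hω _ hω' h ↦ (lt_dist_of_mem_isolatedPairs hω hω' h).le) z hr

theorem lcm_mul_le_of_mem_primeLabels {l l' : ℕ × (Fin k → ℕ)} (hl : l ∈ primeLabels k Q)
    (hl' : l' ∈ primeLabels k Q) (hσ0 : 0 ≤ σ) (hσ : 16 * Q ^ 2 * σ ≤ 1 / 4) :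
    l.1.lcm l'.1 * σ ≤ 1 / 4 := by
  refine le_trans ?_ hσ
  gcongr
  exact_mod_cast lcm_le_of_mem_primeLabels hl hl'

theorem exists_dist_le_of_notMem_isolatedPairs (hσ0 : 0 ≤ σ) (hσ : 16 * Q ^ 2 * σ ≤ 1 / 4)
    {ω : (ℕ × (Fin k → ℕ)) × ℕ} (hω : ω ∈ admissiblePairs Q β u v)
    (hiso : ω ∉ isolatedPairs Q σ β u v) :
    ∃ ω' ∈ admissiblePairs Q β u v, elimination ω.1 ω'.1 ≠ 0 ∧
      dist (hyperplanePoint β ω.1 ω.2) (hyperplanePoint β ω'.1 ω'.2) ≤ σ := by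
  have : ∃ ω' ∈ admissiblePairs Q β u v,
      dist (hyperplanePoint β ω.1 ω.2) (hyperplanePoint β ω'.1 ω'.2) ≤ σ ∧ ω' ≠ ω := by
    by_contra! h
    exact hiso (mem_filter.2 ⟨hω, h⟩)
  obtain ⟨ω', hω', hdist, hne⟩ := this
  refine ⟨ω', hω', fun h0 ↦ hne ?_, hdist⟩
  simp only [admissiblePairs, mem_filter, mem_product] at hω hω'
  exact eq_of_dist_hyperplanePoint_le_of_elimination_eq_zero (mem_primeLabels.1 hω.1.1).2.1
    (mem_primeLabels.1 hω'.1.1).2.1 hω.2.1 hω'.2.1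
    ((lcm_mul_le_of_mem_primeLabels hω.1.1 hω'.1.1 hσ0 hσ).trans_lt (by norm_num)) hdist h0

theorem card_sdiff_isolatedPairs_le (hσ0 : 0 ≤ σ) (hσ : 16 * Q ^ 2 * σ ≤ 1 / 4) :
    (#(admissiblePairs Q β u v \ isolatedPairs Q σ β u v) : ENNReal) ≤ closePairBound k Q σ β := by
  set S := {ll ∈ {ll ∈ primeLabels k Q ×ˢ primeLabels k Q | elimination ll.1 ll.2 ≠ 0} |
    dnint (∑ i, elimination ll.1 ll.2 i * β i) ≤ ll.1.1.lcm ll.2.1 * σ}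
  set R := range ((k + 5) * Q)
  set C := fun ll : (ℕ × (Fin k → ℕ)) × (ℕ × (Fin k → ℕ)) ↦ {pp ∈ R ×ˢ R |
    dist (hyperplanePoint β ll.1 pp.1) (hyperplanePoint β ll.2 pp.2) ≤ σ}
  have hsub : admissiblePairs Q β u v \ isolatedPairs Q σ β u v ⊆
      S.biUnion fun ll ↦ (C ll).image fun pp ↦ (ll.1, pp.1) := fun ω hω ↦ by
    obtain ⟨hω, hiso⟩ := mem_sdiff.1 hω
    obtain ⟨ω', hω', hne, hdist⟩ := exists_dist_le_of_notMem_isolatedPairs hσ0 hσ hω hiso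
    simp only [admissiblePairs, mem_filter, mem_product] at hω hω'
    refine mem_biUnion.2 ⟨(ω.1, ω'.1), ?_, mem_image.2 ⟨(ω.2, ω'.2), ?_, rfl⟩⟩
    · exact mem_filter.2 ⟨mem_filter.2 ⟨mem_product.2 ⟨hω.1.1, hω'.1.1⟩, hne⟩,
        dnint_sum_elimination_mul_le (mem_primeLabels.1 hω.1.1).2.1.pos
          (mem_primeLabels.1 hω'.1.1).2.1.pos hdist⟩
    · exact mem_filter.2 ⟨mem_product.2 ⟨hω.1.2, hω'.1.2⟩, hdist⟩
  have hC (ll) (hll : ll ∈ S) :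
      #((C ll).image fun pp ↦ (ll.1, pp.1)) ≤ (k + 5) * Q / eliminationCoeff ll.2 ll.1 + 1 := by
    obtain ⟨hl, hl'⟩ := mem_product.1 (mem_filter.1 (mem_filter.1 hll).1).1
    exact card_image_le.trans <| card_closeNumerators_le (mem_primeLabels.1 hl).2.1.pos
      (mem_primeLabels.1 hl').2.1.pos (lcm_mul_le_of_mem_primeLabels hl hl' hσ0 hσ) _
  calc _ ≤ ((∑ ll ∈ S, ((k + 5) * Q / eliminationCoeff ll.2 ll.1 + 1) : ℕ) : ENNReal) :=
        Nat.cast_le.2 <| (card_le_card hsub).trans <| card_biUnion_le.trans <| sum_le_sum hC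
    _ = closePairBound k Q σ β := by
      rw [Nat.cast_sum, sum_filter]
      rfl

theorem sixteen_mul_sq_mul_separation_le (k : ℕ) {K : ℕ} (hK : 2 ≤ K) :
    16 * ((2 ^ K : ℕ) : ℝ) ^ 2 * separation k K ≤ 1 / 4 := by
  have hK' : (64 : ℝ) ≤ (K + 1) ^ 4 := by
    have : (3 : ℝ) ≤ K + 1 := by exact_mod_cast Nat.succ_le_succ hK
    calc (64 : ℝ) ≤ 3 ^ 4 := by norm_num
      _ ≤ (K + 1) ^ 4 := by gcongr
  rw [separation, pow_add]
  push_cast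
  calc 16 * ((2 : ℝ) ^ K) ^ 2 * (1 / ((2 ^ K) ^ k * (2 ^ K) ^ 2 * (K + 1) ^ 4))
    _ ≤ 16 * ((2 : ℝ) ^ K) ^ 2 * (1 / (1 * (2 ^ K) ^ 2 * 64)) := by
        gcongr
        exact one_le_pow₀ (one_le_pow₀ one_le_two)
    _ = 1 / 4 := by field_simp; norm_num

variable {K : ℕ}

theorem two_pow_div_le_card_primeLabels_mul
    (hK : (2 : ℝ) ^ K ≤ #{q ∈ Ioc (2 ^ K) (4 * 2 ^ K) | q.Prime} * (K + 1)) :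
    (2 ^ K) ^ (k + 2) / (K + 1) ≤ (#(primeLabels k (2 ^ K)) * 2 ^ K : ℝ) := by
  rw [div_le_iff₀ (by positivity), card_primeLabels]
  push_cast
  calc ((2 : ℝ) ^ K) ^ (k + 2) = 2 ^ K * (2 ^ K) ^ k * 2 ^ K := by ring
    _ ≤ #{q ∈ Ioc (2 ^ K) (4 * 2 ^ K) | q.Prime} * (K + 1) * (2 ^ K) ^ k * 2 ^ K := by gcongr
    _ = _ := by ring

theorem card_primeLabels_mul_le_card_isolatedPairs (hβ : β ∈ Set.Icc 0 1) (hu : 0 ≤ u) (hv : v ≤ 1)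
    (hprimes : (2 : ℝ) ^ K ≤ #{q ∈ Ioc (2 ^ K) (4 * 2 ^ K) | q.Prime} * (K + 1))
    (hclose : closePairBound k (2 ^ K) (separation k K) β <
      ENNReal.ofReal ((2 ^ K) ^ (k + 2) / (K + 1) ^ 2))
    (hK : 2 ≤ K) (hKuv : 4 ≤ (v - u) * (K + 1)) (h2K : 6 ≤ 2 ^ K * (v - u)) :
    #(primeLabels k (2 ^ K)) * 2 ^ K * (v - u) / 4 ≤
      (#(isolatedPairs (2 ^ K) (separation k K) β u v) : ℝ) := by
  set σ := separation k K
  have hbad : (#(admissiblePairs (2 ^ K) β u v \ isolatedPairs (2 ^ K) σ β u v) : ℝ) ≤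
      #(primeLabels k (2 ^ K)) * 2 ^ K * (v - u) / 4 := by
    have h := (card_sdiff_isolatedPairs_le (u := u) (v := v) (separation_pos k K).le
      (sixteen_mul_sq_mul_separation_le k hK)).trans hclose.le
    rw [← ENNReal.ofReal_natCast, ENNReal.ofReal_le_ofReal_iff (by positivity)] at h
    calc _ ≤ ((2 : ℝ) ^ K) ^ (k + 2) / (K + 1) ^ 2 := h
      _ = (2 ^ K) ^ (k + 2) / (K + 1) * (1 / (K + 1)) := by field_simp
      _ ≤ #(primeLabels k (2 ^ K)) * 2 ^ K * ((v - u) / 4) := by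
        refine mul_le_mul (two_pow_div_le_card_primeLabels_mul hprimes) ?_ (by positivity)
          (by positivity)
        rw [div_le_iff₀ (by positivity)]
        linarith
      _ = _ := by ring
  have hcard := card_primeLabels_mul_le_card_admissiblePairs hβ hu hv (Q := 2 ^ K) (mod_cast h2K)
  rw [← card_sdiff_add_card_eq_card (isolatedPairs_subset (σ := σ))] at hcard
  push_cast at hcard
  linarith

end IsolatedPairs

section Spread

open Filter Topology Metric

variable {k Q K : ℕ} {β : Fin k → ℝ} {v t : ℝ}

/-- The first coordinates `a` for which `(a, β)` has an approximation of exponent `v` and height at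
least `j` in the narrowest cone, `ℓ = 1`. -/
def approximableFirstCoords (β : Fin k → ℝ) (j : ℕ) (v : ℝ) : Set ℝ :=
  {a | ∃ x : Fin (k + 1) → ℤ, cone 1 x ∧ j ≤ Hgt x ∧
    dnint (∑ i, x i * (Fin.cons a β : Fin (k + 1) → ℝ) i) ≤ (Hgt x : ℝ) ^ (-v)}

theorem Hgt_cons {q : ℕ} {x : Fin k → ℕ} (hx : ∀ i, x i < q) :
    Hgt (Fin.cons (q : ℤ) (fun i ↦ (x i : ℤ)) : Fin (k + 1) → ℤ) = q := by
  refine le_antisymm (Finset.sup_le fun i _ ↦ ?_) ?_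
  · induction i using Fin.cases with
    | zero => simp
    | succ i => simpa using (hx i).le
  · exact le_sup_of_le (mem_univ 0) (by simp)

theorem cone_one_cons {q : ℕ} (hq : 0 < q) {x : Fin k → ℕ} (hx : ∀ i, x i < q) :
    cone 1 (Fin.cons (q : ℤ) (fun i ↦ (x i : ℤ)) : Fin (k + 1) → ℤ) := by
  refine lt_of_lt_of_le ((Finset.sup_lt_iff hq).2 fun i hi ↦ ?_)
    (le_sup_of_le (b := 0) (by simp) (by simp))
  induction i using Fin.cases with
  | zero => simp at hi
  | succ i => simpa using hx i

theorem dnint_sum_cons_le {q : ℕ} (hq : 0 < q) (x : Fin k → ℕ) (p : ℕ) (a : ℝ) :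
    dnint (∑ i, (Fin.cons (q : ℤ) (fun i ↦ (x i : ℤ)) : Fin (k + 1) → ℤ) i *
      (Fin.cons a β : Fin (k + 1) → ℝ) i) ≤ q * dist a (hyperplanePoint β (q, x) p) := by
  refine (round_le _ p).trans_eq ?_
  have hq' : (q : ℝ) ≠ 0 := mod_cast hq.ne'
  calc _ = |q * (a - hyperplanePoint β (q, x) p)| := by
        rw [hyperplanePoint, Fin.sum_univ_succ, mul_sub, mul_div_cancel₀ _ hq']
        simp only [Fin.cons_zero, Fin.cons_succ, Int.cast_natCast]
        ring_nf
    _ = q * dist a (hyperplanePoint β (q, x) p) := by rw [abs_mul, Nat.abs_cast, Real.dist_eq]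

theorem closedBall_hyperplanePoint_subset (hv : 0 ≤ v) {j : ℕ} (hj : j ≤ Q)
    {l : ℕ × (Fin k → ℕ)} (hl : l ∈ primeLabels k Q) (p : ℕ) :
    closedBall (hyperplanePoint β l p) ((4 * Q) ^ (-(v + 1))) ⊆ approximableFirstCoords β j v := by
  obtain ⟨⟨hQl, hlQ⟩, hprime, hx⟩ := mem_primeLabels.1 hl
  have hx' i := (hx i).trans hQl
  have hQ : (0 : ℝ) < 4 * Q := mod_cast hprime.pos.trans_le hlQ
  intro a ha
  refine ⟨_, cone_one_cons hprime.pos hx', (Hgt_cons hx').symm ▸ hj.trans hQl.le, ?_⟩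
  rw [Hgt_cons hx']
  calc _ ≤ l.1 * dist a (hyperplanePoint β l p) := dnint_sum_cons_le hprime.pos l.2 p a
    _ ≤ 4 * Q * (4 * Q) ^ (-(v + 1)) := by
      gcongr
      · exact_mod_cast hlQ
      · exact ha
    _ = (4 * Q : ℝ) ^ (-v) := by
      rw [mul_comm, ← Real.rpow_add_one hQ.ne']
      ring_nf
    _ ≤ (l.1 : ℝ) ^ (-v) := Real.rpow_le_rpow_of_nonpos (mod_cast hprime.pos) (mod_cast hlQ)
      (neg_nonpos.2 hv)

theorem card_filter_isolatedPairs_le_of_one_le {σ u w R : ℝ} (hR : 0 < R)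
    (hcard : #(primeLabels k Q) * Q * R / 4 ≤ (#(isolatedPairs Q σ β u w) : ℝ)) (z : ℝ) {r : ℝ}
    (hr : 0 ≤ r) (hQr : 1 ≤ Q * r) :
    (#{ω ∈ isolatedPairs Q σ β u w | dist (hyperplanePoint β ω.1 ω.2) z ≤ r} : ℝ) ≤
      #(isolatedPairs Q σ β u w) * (36 * r / R) := by
  have hQ : 0 < Q := Nat.pos_of_ne_zero (by rintro rfl; norm_num at hQr)
  calc _ ≤ (#{ω ∈ admissiblePairs Q β u w | dist (hyperplanePoint β ω.1 ω.2) z ≤ r} : ℝ) :=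
        Nat.cast_le.2 (card_le_card (filter_subset_filter _ isolatedPairs_subset))
    _ ≤ #(primeLabels k Q) * (1 + 8 * (Q * r)) := card_filter_admissiblePairs_le hQ z hr
    _ ≤ #(primeLabels k Q) * (9 * (Q * r)) := by
      gcongr
      linarith
    _ = #(primeLabels k Q) * Q * R / 4 * (36 * r / R) := by
      field_simp
      ring
    _ ≤ _ := by gcongr

theorem one_le_half_two_pow_mul {R η r : ℝ} (hR : 0 < R) (hη : 0 < η) (ht : 0 ≤ t)
    (hrv : (4 * 2 ^ K) ^ (-(v + 1)) ≤ r)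
    (hK : 8 * 4 ^ ((v + 1) * t) / (R * η) * (K + 1) ^ 1 ≤
      ((2 : ℝ) ^ K) ^ (k + 2 - (v + 1) * t)) :
    1 ≤ (2 ^ K) ^ (k + 2) * R / (4 * (K + 1)) * (η * r ^ t) / 2 := by
  have : (0 : ℝ) < K + 1 := by positivity
  have hQ : (0 : ℝ) < 2 ^ K := by positivity
  set κ : ℝ := K + 1
  set q : ℝ := 2 ^ K
  set e := (v + 1) * t
  have hrt : 1 / (4 ^ e * q ^ e) ≤ r ^ t := calc
    _ = ((4 * q) ^ (-(v + 1))) ^ t := by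
      rw [← Real.rpow_mul (by positivity), neg_mul, Real.rpow_neg (by positivity),
        Real.mul_rpow (by norm_num) hQ.le, one_div]
    _ ≤ r ^ t := by gcongr
  rw [Real.rpow_sub hQ, show (k + 2 : ℝ) = (k + 2 : ℕ) by push_cast; rfl, Real.rpow_natCast,
    pow_one] at hK
  calc 1 = 8 * 4 ^ e / (R * η) * κ * (R * η / (8 * κ * 4 ^ e)) := by field_simp
    _ ≤ q ^ (k + 2) / q ^ e * (R * η / (8 * κ * 4 ^ e)) := by gcongr
    _ = q ^ (k + 2) * R / (4 * κ) * (η * (1 / (4 ^ e * q ^ e))) / 2 := by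
      field_simp
      norm_num
    _ ≤ q ^ (k + 2) * R / (4 * κ) * (η * r ^ t) / 2 := by gcongr

theorem two_mul_div_separation_le {R η r : ℝ} (hR : 0 < R) (hη : 0 < η) (hr : 0 < r) (ht1 : t ≤ 1)
    (hrK : 2 ^ K * r ≤ 1) (hK : 16 / (R * η) * (K + 1) ^ 5 ≤ ((2 : ℝ) ^ K) ^ (1 - t)) :
    2 * r / separation k K ≤ (2 ^ K) ^ (k + 2) * R / (4 * (K + 1)) * (η * r ^ t) / 2 := by
  have : (0 : ℝ) < K + 1 := by positivity
  have hQ : (0 : ℝ) < 2 ^ K := by positivity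
  unfold separation
  set κ : ℝ := K + 1
  set q : ℝ := 2 ^ K
  have hqr : 16 / (R * η) * κ ^ 5 * r ^ (1 - t) ≤ 1 := calc
    _ ≤ q ^ (1 - t) * r ^ (1 - t) := by gcongr
    _ = (q * r) ^ (1 - t) := (Real.mul_rpow hQ.le hr.le).symm
    _ ≤ 1 := Real.rpow_le_one (by positivity) hrK (by linarith)
  have hsplit : r ^ t * r ^ (1 - t) = r := by
    rw [← Real.rpow_add hr, add_sub_cancel, Real.rpow_one]
  calc 2 * r / (1 / (q ^ (k + 2) * κ ^ 4))
    _ = 2 * (r ^ t * r ^ (1 - t)) * (q ^ (k + 2) * κ ^ 4) := by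
      rw [hsplit, one_div, div_inv_eq_mul]
    _ = q ^ (k + 2) * R / (4 * κ) * (η * r ^ t) / 2 * (16 / (R * η) * κ ^ 5 * r ^ (1 - t)) := by
      field_simp
      norm_num
    _ ≤ q ^ (k + 2) * R / (4 * κ) * (η * r ^ t) / 2 := mul_le_of_le_one_right (by positivity) hqr

theorem eventually_card_filter_isolatedPairs_le (hv : (v + 1) * t < k + 2) (ht : 0 ≤ t)
    (ht1 : t < 1) {R η : ℝ} (hR : 0 < R) (hη : 0 < η) :
    ∀ᶠ K : ℕ in atTop, ∀ u w : ℝ,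
      #(primeLabels k (2 ^ K)) * 2 ^ K * R / 4 ≤
        (#(isolatedPairs (2 ^ K) (separation k K) β u w) : ℝ) →
      ∀ z r, (4 * 2 ^ K) ^ (-(v + 1)) ≤ r →
        (#{ω ∈ isolatedPairs (2 ^ K) (separation k K) β u w |
            dist (hyperplanePoint β ω.1 ω.2) z ≤ r} : ℝ) ≤
          #(isolatedPairs (2 ^ K) (separation k K) β u w) * (36 * r / R + η * r ^ t) := by
  filter_upwards [eventually_two_pow_le_card_primes_mul,
    eventually_mul_pow_le_two_pow_rpow (16 / (R * η)) 5 (sub_pos.2 ht1),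
    eventually_mul_pow_le_two_pow_rpow (8 * 4 ^ ((v + 1) * t) / (R * η)) 1 (sub_pos.2 hv)]
    with K hprimes h1 h2 u w hcard z r hr
  have hr0 : 0 < r := lt_of_lt_of_le (by positivity) hr
  have : 0 ≤ 36 * r / R := by positivity
  have : 0 ≤ η * r ^ t := by positivity
  rcases le_total 1 (2 ^ K * r) with hKr | hKr
  · refine (card_filter_isolatedPairs_le_of_one_le hR (mod_cast hcard) z hr0.le
      (mod_cast hKr)).trans ?_
    gcongr
    linarith
  · calc _ ≤ 1 + 2 * r / separation k K :=
          card_filter_isolatedPairs_le (separation_pos k K) z hr0.le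
      _ ≤ (2 ^ K) ^ (k + 2) * R / (4 * (K + 1)) * (η * r ^ t) := by
        linarith [one_le_half_two_pow_mul hR hη ht hr h2,
          two_mul_div_separation_le (k := k) hR hη hr0 ht1.le hKr h1]
      _ = (2 ^ K) ^ (k + 2) / (K + 1) * R / 4 * (η * r ^ t) := by field_simp
      _ ≤ #(primeLabels k (2 ^ K)) * 2 ^ K * R / 4 * (η * r ^ t) := by
        gcongr
        exact two_pow_div_le_card_primeLabels_mul hprimes
      _ ≤ _ := by
        gcongr
        linarith

theorem eventually_card_primeLabels_mul_le_card_isolatedPairs (hβ : β ∈ Set.Icc 0 1)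
    (hclose : ∀ᶠ K : ℕ in atTop, closePairBound k (2 ^ K) (separation k K) β <
      ENNReal.ofReal ((2 ^ K) ^ (k + 2) / (K + 1) ^ 2)) {R : ℝ} (hR : 0 < R) :
    ∀ᶠ K : ℕ in atTop, 0 < #(primeLabels k (2 ^ K)) ∧ ∀ u w : ℝ, 0 ≤ u → w ≤ 1 → R ≤ w - u →
      #(primeLabels k (2 ^ K)) * 2 ^ K * R / 4 ≤
        (#(isolatedPairs (2 ^ K) (separation k K) β u w) : ℝ) := by
  have hlin : ∀ᶠ K : ℕ in atTop, 4 / R ≤ K :=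
    tendsto_natCast_atTop_atTop.eventually_ge_atTop _
  have hpow : ∀ᶠ K : ℕ in atTop, 6 / R ≤ 2 ^ K :=
    (tendsto_pow_atTop_atTop_of_one_lt one_lt_two).eventually_ge_atTop _
  filter_upwards [hclose, eventually_two_pow_le_card_primes_mul, eventually_ge_atTop 2, hlin, hpow]
    with K hcloseK hprimes hK h4 h6
  rw [div_le_iff₀ hR] at h4 h6
  refine ⟨?_, fun u w hu hw huw ↦ ?_⟩
  · have h := (by positivity : (0 : ℝ) < (2 ^ K) ^ (k + 2) / (K + 1)).trans_le
      (two_pow_div_le_card_primeLabels_mul hprimes)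
    exact_mod_cast pos_of_mul_pos_left h (by positivity)
  · calc _ ≤ (#(primeLabels k (2 ^ K)) * 2 ^ K * (w - u) / 4 : ℝ) := by gcongr
      _ ≤ _ := card_primeLabels_mul_le_card_isolatedPairs hβ hu hw hprimes hcloseK hK
        (by nlinarith) (h6.trans (by gcongr))

theorem eventually_four_mul_two_pow_rpow_le (hv : 0 ≤ v) {η : ℝ} (hη : 0 < η) :
    ∀ᶠ K : ℕ in atTop, (4 * 2 ^ K : ℝ) ^ (-(v + 1)) ≤ η := by
  have h : Tendsto (fun K : ℕ ↦ (4 * 2 ^ K : ℝ)) atTop atTop :=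
    (tendsto_pow_atTop_atTop_of_one_lt one_lt_two).const_mul_atTop (by norm_num)
  exact ((tendsto_rpow_neg_atTop (by linarith)).comp h).eventually_le_const hη

theorem injOn_hyperplanePoint_isolatedPairs {σ u w : ℝ} (hσ : 0 ≤ σ) :
    Set.InjOn (fun ω : (ℕ × (Fin k → ℕ)) × ℕ ↦ hyperplanePoint β ω.1 ω.2)
      (isolatedPairs Q σ β u w) :=
  fun _ hω _ hω' h ↦ by_contra fun hne ↦
    (hσ.trans_lt (lt_dist_of_mem_isolatedPairs hω hω' hne)).ne' (dist_eq_zero.2 h)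

theorem isSpread_approximableFirstCoords (hβ : β ∈ Set.Icc 0 1)
    (hclose : ∀ᶠ K : ℕ in atTop, closePairBound k (2 ^ K) (separation k K) β <
      ENNReal.ofReal ((2 ^ K) ^ (k + 2) / (K + 1) ^ 2))
    (hv : 0 ≤ v) (ht : 0 ≤ t) (ht1 : t < 1) (hvt : (v + 1) * t < k + 2) (j : ℕ) :
    IsSpread t 36 (Set.Icc 0 1) (approximableFirstCoords β j v) := by
  intro x R hR hB η hη
  obtain ⟨K, ⟨hlabels, hmany⟩, hspread, hρη, hρR, hjK⟩ :=
    ((eventually_card_primeLabels_mul_le_card_isolatedPairs hβ hclose hR).and <|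
      (eventually_card_filter_isolatedPairs_le hvt ht ht1 hR hη).and <|
      (eventually_four_mul_two_pow_rpow_le hv hη).and <|
      (eventually_four_mul_two_pow_rpow_le hv (half_pos hR)).and <| eventually_ge_atTop j).exists
  set ρ : ℝ := (4 * 2 ^ K) ^ (-(v + 1))
  have hρ : 0 < ρ := by positivity
  rw [Real.closedBall_eq_Icc, Set.Icc_subset_Icc_iff (by linarith)] at hB
  set G := isolatedPairs (2 ^ K) (separation k K) β (x - R + ρ) (x + R - ρ)
  have hG : #(primeLabels k (2 ^ K)) * 2 ^ K * R / 4 ≤ (#G : ℝ) :=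
    hmany _ _ (by linarith) (by linarith) (by linarith)
  have hG0 : G.Nonempty := card_pos.1 <| by
    exact_mod_cast (by positivity : (0 : ℝ) < _).trans_le hG
  have hcard : #(G.image fun ω ↦ hyperplanePoint β ω.1 ω.2) = #G :=
    card_image_of_injOn (injOn_hyperplanePoint_isolatedPairs (separation_pos k K).le)
  refine ⟨G.image fun ω ↦ hyperplanePoint β ω.1 ω.2, ρ, hG0.image _, hρ, hρη, ?_, fun z r hr ↦ ?_⟩
  · simp only [forall_mem_image]
    intro ω hω
    obtain ⟨hωprod, -, hωl, hωr⟩ := mem_filter.1 (isolatedPairs_subset hω)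
    have hball := closedBall_hyperplanePoint_subset (β := β) hv (hjK.trans Nat.lt_two_pow_self.le)
      (mem_product.1 hωprod).1 ω.2
    push_cast at hball
    refine ⟨?_, hball⟩
    rw [Real.dist_eq, ← le_sub_iff_add_le, abs_le]
    constructor <;> linarith
  · rw [filter_image, hcard]
    exact (Nat.cast_le.2 card_image_le).trans (hspread _ _ hG z r hr)

end Spread

section LowerBound

open Filter Metric

theorem exists_tsum_closedBall_le {ι : Type*} [Fintype ι] {μ : Measure (ι → ℝ)}
    [IsProbabilityMeasure μ] (hμ : μ ≤ volume) {p : (ι → ℝ) → Prop} (hp : ∀ᵐ β ∂μ, p β)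
    (w : ℕ → ι → ℝ) {r : ℕ → ℝ} (hr : ∀ i, 0 < r i) (t : ℝ) :
    ∃ β, p β ∧ ∑' i : {i // β ∈ closedBall (w i) (r i)}, ENNReal.ofReal (r i ^ t) ≤
      2 ^ Fintype.card ι * ∑' i, ENNReal.ofReal (r i ^ (Fintype.card ι + t)) := by
  let g (i : ℕ) : (ι → ℝ) → ENNReal :=
    (closedBall (w i) (r i)).indicator fun _ ↦ ENNReal.ofReal (r i ^ t)
  have hg (i : ℕ) : Measurable (g i) := measurable_const.indicator measurableSet_closedBall
  have hint (i : ℕ) : ∫⁻ β, g i β = 2 ^ Fintype.card ι *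
      ENNReal.ofReal (r i ^ (Fintype.card ι + t)) := by
    rw [lintegral_indicator_const measurableSet_closedBall, Real.volume_pi_closedBall _ (hr i).le,
      mul_pow, Real.rpow_add (hr i), Real.rpow_natCast, mul_comm,
      ENNReal.ofReal_mul (by positivity), ENNReal.ofReal_mul (by have := hr i; positivity),
      ENNReal.ofReal_pow zero_le_two, ENNReal.ofReal_ofNat, mul_assoc]
  obtain ⟨β, hβ, hle⟩ := exists_notMem_null_le_lintegral
    (Measurable.tsum hg : Measurable fun β ↦ ∑' i, g i β).aemeasurable (ae_iff.1 hp)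
  refine ⟨β, not_not.1 hβ, ?_⟩
  calc _ = ∑' i, g i β :=
        tsum_subtype {i | β ∈ closedBall (w i) (r i)} fun i ↦ ENNReal.ofReal (r i ^ t)
    _ ≤ ∫⁻ β, ∑' i, g i β ∂μ := hle
    _ ≤ ∫⁻ β, ∑' i, g i β := lintegral_mono' hμ le_rfl
    _ = _ := by
      rw [lintegral_tsum fun i ↦ (hg i).aemeasurable]
      simp_rw [hint, ENNReal.tsum_mul_left]

variable {k : ℕ} {t m : ℝ}

theorem exists_forall_mem_approximableFirstCoords_cons_notMem (ht : 0 < t) (ht1 : t < 1)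
    {v : ℕ → ℝ} (hv : ∀ j, 0 ≤ v j) (hvt : ∀ j, (v j + 1) * t < k + 2) {N : Set (Fin (k + 1) → ℝ)}
    (hN : μH[k + t] N = 0) :
    ∃ (a : ℝ) (β : Fin k → ℝ), (∀ j, a ∈ approximableFirstCoords β j (v j)) ∧
      (Fin.cons a β : Fin (k + 1) → ℝ) ∉ N := by
  have : IsProbabilityMeasure ((volume : Measure (Fin k → ℝ)).restrict (Set.Icc 0 1)) :=
    ⟨by simp [Real.volume_Icc_pi]⟩
  obtain ⟨θ, hθ, hθ1, hθA⟩ := exists_small_constant ht1 36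
  obtain ⟨z, r, hr, hcover, hsum⟩ := exists_closedBall_cover_of_hausdorffMeasure_eq_zero
    (by positivity) hN
    (ENNReal.div_pos (ENNReal.ofReal_pos.2 (by positivity : 0 < (θ * (1 / 2)) ^ t)).ne'
      (by finiteness : (2 : ENNReal) ^ k ≠ ⊤))
  obtain ⟨β, ⟨hβ, hclose⟩, hweight⟩ := exists_tsum_closedBall_le Measure.restrict_le_self
    ((ae_restrict_mem measurableSet_Icc).and (ae_eventually_closePairBound_lt k))
    (fun i ↦ Fin.tail (z i)) hr t
  rw [Fintype.card_fin] at hweight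
  obtain ⟨a, ha, haN⟩ := exists_mem_iInter_notMem_iUnion_closedBall
    (fun j ↦ isSpread_approximableFirstCoords hβ hclose (hv j) ht.le ht1 (hvt j) j) ht ht1
    (by norm_num) hθ hθ1 hθA (z := fun i : {i // β ∈ closedBall (Fin.tail (z i)) (r i)} ↦ z i 0)
    (fun i ↦ hr i) one_half_pos (x := 1 / 2) (by norm_num [Real.closedBall_eq_Icc])
    (hweight.trans ((mul_le_mul_right hsum _).trans ENNReal.mul_div_le))
  refine ⟨a, β, Set.mem_iInter.1 ha, fun h ↦ haN ?_⟩
  obtain ⟨i, hi⟩ := Set.mem_iUnion.1 (hcover h)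
  rw [mem_closedBall, dist_pi_le_iff (hr i).le, Fin.forall_fin_succ] at hi
  exact Set.mem_iUnion.2 ⟨⟨i, (dist_pi_le_iff (hr i).le).2 hi.2⟩, hi.1⟩

theorem hausdorffMeasure_mu_eq_ne_zero {n ℓ : ℕ} [NeZero n] (hℓ : 1 ≤ ℓ) (hm : n < m) :
    μH[n - 1 + (n + 1) / (m + 1)] {α : Fin n → ℝ | mu n ℓ α = m} ≠ 0 := by
  obtain ⟨k, rfl⟩ : ∃ k, n = k + 1 := Nat.exists_eq_succ_of_ne_zero (NeZero.ne n)
  have : (k + 1 : ℝ) < m := mod_cast hm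
  have hm1 : 0 < m + 1 := by linarith [k.cast_nonneg (α := ℝ)]
  set t : ℝ := (k + 2) / (m + 1)
  have ht : 0 < t := by positivity
  have ht1 : t < 1 := by rw [div_lt_one hm1]; linarith
  have hmt : (m + 1) * t = k + 2 := mul_div_cancel₀ _ hm1.ne'
  have hd : (k + 1 : ℕ) - 1 + ((k + 1 : ℕ) + 1) / (m + 1) = k + t := by
    simp only [t]
    push_cast
    ring
  have hv (j : ℕ) : 0 ≤ m - 1 / (j + 1) := by
    have : 1 / ((j : ℝ) + 1) ≤ 1 := by
      simpa using Nat.one_div_le_one_div (α := ℝ) j.zero_le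
    linarith
  have hvt (j : ℕ) : (m - 1 / (j + 1) + 1) * t < k + 2 := by
    have : 0 < 1 / ((j : ℝ) + 1) := Nat.one_div_pos_of_nat
    rw [← hmt]
    gcongr
    linarith
  rw [hd]
  intro hzero
  obtain ⟨a, β, ha, hN⟩ := exists_forall_mem_approximableFirstCoords_cons_notMem ht ht1 hv hvt
    (measure_union_null hzero <| measure_union_null
      (hausdorffMeasure_exists_gt_mem_coneApproximable_eq_zero ℓ (by linarith) hd.le)
      (hausdorffMeasure_rational_hyperplanes_eq_zero (by push_cast; linarith)))
  simp only [Set.mem_union, not_or, Set.mem_ofPred, not_exists, not_and] at hN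
  obtain ⟨hmu, hgt, hirr⟩ := hN
  refine hmu (mu_eq_of_forall_lt_of_forall_gt (by linarith) (fun M hM ↦ ?_) hgt)
  have hlim : Tendsto (fun j : ℕ ↦ m - 1 / ((j : ℝ) + 1)) atTop (nhds m) := by
    simpa using (tendsto_one_div_add_atTop_nhds_zero_nat (𝕜 := ℝ)).const_sub m
  refine mem_coneApproximable_of_irrational hirr (hlim.eventually_const_le hM) fun j ↦ ?_
  obtain ⟨x, hcone, hx⟩ := ha j
  exact ⟨x, cone_mono hℓ hcone, hx⟩

end LowerBound

theorem dimH_exact_order (n ℓ : ℕ) (hℓ : 1 ≤ ℓ) (hn : ℓ ≤ n) (m : ℝ) (hm : (n : ℝ) < m) :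
    dimH {α : Fin n → ℝ | mu n ℓ α = m} =
      ENNReal.ofReal ((n : ℝ) - 1 + ((n : ℝ) + 1) / (m + 1)) ∧
    {α : Fin n → ℝ | mu n ℓ α = m}.Nonempty := by
  have : NeZero n := ⟨by lia⟩
  have hpos := hausdorffMeasure_mu_eq_ne_zero hℓ hm
  have hd : 0 ≤ (n : ℝ) - 1 + (n + 1) / (m + 1) := by
    have : (1 : ℝ) ≤ n := mod_cast hℓ.trans hn
    have : 0 ≤ (n + 1) / (m + 1) := div_nonneg (by linarith) (by linarith)
    linarith
  refine ⟨(dimH_mu_eq_le ℓ (n.cast_nonneg.trans_lt hm)).antisymm ?_,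
    nonempty_of_measure_ne_zero hpos⟩
  exact le_dimH_of_hausdorffMeasure_ne_zero (by rwa [Real.coe_toNNReal _ hd])
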